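/- Tripartite entropic uncertainty relation for sandwiched conditional Rényi entropies (generalized Maassen–Uffink relation): let A, B, C be nonempty finite types, let φ, ϑ : A → (A → ℂ) be two orthonormal bases of ℂ^A (with the standard inner product), and let c = max_{x,y} |⟨φ x, ϑ y⟩|² be their overlap. Let ρ be a density matrix indexed by A × B × C, with partial traces ρ_AB (over C) and ρ_AC (over B). Define the measured classical-quantum states: ρ_XB is the matrix indexed by A × B with entries ρ_XB((x,b),(x',b')) = (if x = x' then ∑_{a,a'} conj(φ x a) · ρ_AB((a,b),(a',b')) · (φ x a') else 0), and analogously ρ_YC indexed by A × C using the basis ϑ and ρ_AC. For γ ∈ (1/2,∞) with γ ≠ 1 and ω a positive semidefinite matrix indexed by X × D, define the sandwiched conditional Rényi entropy H̃_γ↑(X|D)_ω as the supremum, over positive definite density matrices σ indexed by D, of (1/(1−γ))·ln(Re tr(((1_X ⊗ σ^{(1−γ)/(2γ)}) · ω · (1_X ⊗ σ^{(1−γ)/(2γ)}))^γ)). Then for all α, β ∈ (1/2,∞) with α ≠ 1, β ≠ 1 and 1/α + 1/β = 2: H̃_α↑(X|B)_{ρ_XB} + H̃_β↑(Y|C)_{ρ_YC}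 ≥ −ln c. -/

import Mathlib

/-!
The proof works with a purification. Write `ρ = R R†`, so that `R` is a vector on `A, B, C, E`; its
coefficients in the basis `φ` form matrices `S_x : B ← C E`, and those in `ϑ` form matrices
`T_y : C ← B E`, with `T = (u ⊗ 1) S` for the unitary `u_{yx} = ⟨ϑ y, φ x⟩`, whose entries satisfy
`|u_{yx}|² ≤ c`. By symmetry take `α < 1 < β` and put `t = (1 - α)/α = (β - 1)/β ∈ (0, 1)`. Since
`X X†` and `X† X` have the same nonzero spectrum, the traces defining the two entropies become
`Q_α(τ) = ∑_x tr (S_x† τ^t S_x)^α` and `Q_β(σ) = ∑_y tr (T_y† σ^{-t} T_y)^β`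
(`condRenyiUp_bd`).

Let `H_β` be the entropy of order `β` and `L = exp (-t H_β)`, so `L ≤ Q_β(σ)^{1/β}` for all `σ`. By
Hölder duality, `Q_β(σ)^{1/β}` is the maximum over classical-quantum states `ω` on `Y B E` of
`∑_y tr (ω_y^t W_y(σ))` with `W_y(σ) = (T_y† σ^{-t} T_y)ᵀ`. This is concave in `ω` and convex in `σ`,
so by Sion's minimax theorem one `ω` serves all `σ` (`exists_state_minimax`). Let `τ` be the
`B`-marginal of this `ω`.

The heart is an operator inequality: for every classical-quantum state `ν` on `X C E` with
`C`-marginal `σ`,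
`⨁_y ω_y ⊗ σ⁻¹ ≤ c · (u ⊗ 1) (⨁_x τ ⊗ ν_x⁻¹) (u ⊗ 1)†`.
It follows from Young's inequality `2 Re ⟨v, q⟩ ≤ ⟨v, ν v⟩ + ⟨q, ν⁻¹ q⟩` (`form_inv_le`). Raising it to
the power `t` by the Löwner–Heinz inequality and evaluating at the vector `T` (`lowner_step`) gives
`L ≤ c^t ∑_x tr (ν_x^{-t} (S_x† τ^t S_x)ᵀ)` for all `ν`. The infimum over `ν` is `Q_α(τ)^{1/α}` by
Hölder duality below one (`le_of_forall_state`), so `L ≤ c^t Q_α(τ)^{1/α}`; taking logarithms and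
dividing by `t` gives `-H_β ≤ log c + H_α`. As `τ` may be singular, it is replaced by
`(τ + κ 1)/(1 + ε)` with `κ = ε / dim B`, and `ε → 0` at the end.
-/

open Matrix
open scoped ComplexOrder Kronecker

/-- Real power of a Hermitian matrix via the spectral decomposition (junk value `0`
if the matrix is not Hermitian). Eigenvalue `0` is sent to `0` whenever `c ≠ 0`. -/
noncomputable def mpow {d : Type*} [Fintype d] [DecidableEq d]
    (M : Matrix d d ℂ) (c : ℝ) : Matrix d d ℂ :=
  if hM : M.IsHermitian then hM.cfc (fun t => t ^ c) else 0

/-- The sandwiched conditional Rényi entropy `H̃_γ↑(X|D)_ω`, defined as the supremum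
over positive definite density matrices `σ` on `D` of
`(1/(1-γ))·ln (Re tr (((1_X ⊗ σ^((1-γ)/(2γ))) ω (1_X ⊗ σ^((1-γ)/(2γ))))^γ))`. -/
noncomputable def condRenyiUp {X D : Type*} [Fintype X] [DecidableEq X]
    [Fintype D] [DecidableEq D] (γ : ℝ) (ω : Matrix (X × D) (X × D) ℂ) : ℝ :=
  ⨆ σ : {σ : Matrix D D ℂ // σ.PosDef ∧ σ.trace = 1},
    (1 / (1 - γ)) * Real.log
      (((mpow
          (((1 : Matrix X X ℂ) ⊗ₖ mpow σ.1 ((1 - γ) / (2 * γ))) * ω *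
            ((1 : Matrix X X ℂ) ⊗ₖ mpow σ.1 ((1 - γ) / (2 * γ))))
          γ).trace).re)

/-- The classical-quantum state obtained by measuring the first factor of a bipartite
state `M` in the orthonormal basis `e`: its `((x,d),(x',d'))` entry is
`if x = x' then ∑_{a,a'} conj (e x a) · M ((a,d),(a',d')) · e x a' else 0`. -/
noncomputable def measuredState {A D : Type*} [Fintype A] [DecidableEq A] [Fintype D]
    (e : A → A → ℂ) (M : Matrix (A × D) (A × D) ℂ) : Matrix (A × D) (A × D) ℂ :=
  Matrix.of fun p q =>
    if p.1 = q.1 then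
      ∑ a : A, ∑ a' : A, (starRingEnd ℂ) (e p.1 a) * M (a, p.2) (a', q.2) * e p.1 a'
    else 0

/-! ### Powers of Hermitian matrices through diagonalisation -/

section Spectral
variable {m n : Type*} [Fintype m] [DecidableEq m] [Fintype n] [DecidableEq n]

/-- Interpolation turns `t ↦ t ^ c` into a polynomial on any finite set of eigenvalues; `mpow` is
thereby computed from any diagonalisation, not just the one chosen in its definition. -/
lemma mpow_interp (S : Finset ℝ) (c : ℝ) : ∃ p : Polynomial ℝ, (∀ x ∈ S, p.eval x = x ^ c) := by
  refine ⟨Lagrange.interpolate S id (fun x => x ^ c), fun x hx => ?_⟩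
  exact Lagrange.eval_interpolate_at_node (v := id) (fun x => x ^ c) (Set.injOn_id _) hx

lemma mpow_eq_aeval {M : Matrix m m ℂ} (hM : M.IsHermitian) (c : ℝ) (p : Polynomial ℝ)
    (hp : ∀ i, p.eval (hM.eigenvalues i) = hM.eigenvalues i ^ c) :
    mpow M c = Polynomial.aeval M p := by
  rw [mpow, dif_pos hM, ← hM.cfc_eq, ← cfc_polynomial p M hM.isSelfAdjoint]
  apply cfc_congr
  intro x hx
  rw [hM.spectrum_real_eq_range_eigenvalues] at hx
  obtain ⟨i, rfl⟩ := hx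
  exact (hp i).symm

lemma aeval_conj {V : Matrix m m ℂ} (hV : Vᴴ * V = 1) (D : Matrix m m ℂ) (p : Polynomial ℝ) :
    Polynomial.aeval (V * D * Vᴴ) p = V * Polynomial.aeval D p * Vᴴ := by
  have hV' : V * Vᴴ = 1 := mul_eq_one_comm.mp hV
  induction p using Polynomial.induction_on' with
  | add p q hp hq => simp only [map_add, hp, hq, mul_add, add_mul]
  | monomial k a =>
    have : ∀ k : ℕ, (V * D * Vᴴ) ^ k = V * D ^ k * Vᴴ := by
      intro k
      induction k with
      | zero => simp [hV']
      | succ k ih =>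
        rw [pow_succ, ih, pow_succ]
        calc V * D ^ k * Vᴴ * (V * D * Vᴴ) = V * D ^ k * (Vᴴ * V) * D * Vᴴ := by
              simp only [mul_assoc]
          _ = _ := by rw [hV, mul_one]; simp only [mul_assoc]
    simp only [Polynomial.aeval_monomial, this, ← Algebra.smul_def, Matrix.mul_smul, Matrix.smul_mul]

lemma aeval_diagonal (l : m → ℝ) (p : Polynomial ℝ) :
    Polynomial.aeval (diagonal fun i => (l i : ℂ)) p = diagonal fun i => ((p.eval (l i) : ℝ) : ℂ) := by
  induction p using Polynomial.induction_on' with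
  | add p q hp hq => simp only [map_add, hp, hq, Polynomial.eval_add, Complex.ofReal_add, diagonal_add]
  | monomial k a =>
    simp only [Polynomial.aeval_monomial, Matrix.diagonal_pow, ← Algebra.smul_def, Polynomial.eval_monomial]
    ext i j
    by_cases h : i = j
    · subst h; simp
    · simp [h]

lemma isHermitian_diag (V : Matrix m m ℂ) (l : m → ℝ) :
    (V * diagonal (fun i => (l i : ℂ)) * Vᴴ).IsHermitian := by
  apply isHermitian_mul_mul_conjTranspose
  rw [Matrix.IsHermitian, diagonal_conjTranspose]
  congr 1; ext i; simp

/-- `mpow` can be computed in any orthonormal eigenbasis. All algebraic rules for `mpow` below are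
read off from this lemma. -/
lemma mpow_diag {V : Matrix m m ℂ} (hV : Vᴴ * V = 1) (l : m → ℝ) (c : ℝ) :
    mpow (V * diagonal (fun i => (l i : ℂ)) * Vᴴ) c =
      V * diagonal (fun i => ((l i ^ c : ℝ) : ℂ)) * Vᴴ := by
  have hM := isHermitian_diag V l
  obtain ⟨p, hp⟩ := mpow_interp (Finset.univ.image hM.eigenvalues ∪ Finset.univ.image l) c
  rw [mpow_eq_aeval hM c p (fun i => hp _ (by simp)), aeval_conj hV, aeval_diagonal]
  simp only [fun i => hp (l i) (by simp)]

lemma exists_diag {M : Matrix m m ℂ} (hM : M.IsHermitian) : ∃ (V : Matrix m m ℂ) (l : m → ℝ),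
    Vᴴ * V = 1 ∧ V * Vᴴ = 1 ∧ M = V * diagonal (fun i => (l i : ℂ)) * Vᴴ := by
  refine ⟨hM.eigenvectorUnitary, hM.eigenvalues, ?_, ?_, ?_⟩
  · exact Unitary.coe_star_mul_self hM.eigenvectorUnitary
  · exact Unitary.coe_mul_star_self hM.eigenvectorUnitary
  · conv_lhs => rw [hM.spectral_theorem]
    rfl

lemma diag_entry {V M : Matrix m m ℂ} {l : m → ℝ} (hV : Vᴴ * V = 1)
    (hM : M = V * diagonal (fun i => (l i : ℂ)) * Vᴴ) :
    Vᴴ * M * V = diagonal (fun i => (l i : ℂ)) := by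
  rw [hM]
  calc _ = (Vᴴ * V) * diagonal (fun i => (l i : ℂ)) * (Vᴴ * V) := by simp only [mul_assoc]
    _ = _ := by rw [hV]; simp

lemma exists_diag_psd {M : Matrix m m ℂ} (hM : M.PosSemidef) : ∃ (V : Matrix m m ℂ) (l : m → ℝ),
    Vᴴ * V = 1 ∧ V * Vᴴ = 1 ∧ (∀ i, 0 ≤ l i) ∧ M = V * diagonal (fun i => (l i : ℂ)) * Vᴴ := by
  obtain ⟨V, l, h1, h2, h3⟩ := exists_diag hM.1
  refine ⟨V, l, h1, h2, fun i => ?_, h3⟩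
  have := hM.conjTranspose_mul_mul_same V
  rw [diag_entry h1 h3, posSemidef_diagonal_iff] at this
  exact_mod_cast this i

lemma exists_diag_pd {M : Matrix m m ℂ} (hM : M.PosDef) : ∃ (V : Matrix m m ℂ) (l : m → ℝ),
    Vᴴ * V = 1 ∧ V * Vᴴ = 1 ∧ (∀ i, 0 < l i) ∧ M = V * diagonal (fun i => (l i : ℂ)) * Vᴴ := by
  obtain ⟨V, l, h1, h2, h3⟩ := exists_diag hM.1
  refine ⟨V, l, h1, h2, fun i => ?_, h3⟩
  have : (Vᴴ * M * V).PosDef := by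
    refine hM.conjTranspose_mul_mul_same ?_
    intro x y hxy
    have := congrArg (fun z => Vᴴ *ᵥ z) hxy
    simpa [mulVec_mulVec, h1] using this
  rw [diag_entry h1 h3, posDef_diagonal_iff] at this
  exact_mod_cast this i

lemma psd_diag (V : Matrix m m ℂ) {l : m → ℝ} (hl : ∀ i, 0 ≤ l i) :
    (V * diagonal (fun i => (l i : ℂ)) * Vᴴ).PosSemidef := by
  apply PosSemidef.mul_mul_conjTranspose_same
  rw [posSemidef_diagonal_iff]
  exact_mod_cast hl

lemma pd_diag {V : Matrix m m ℂ} (hV : V * Vᴴ = 1) {l : m → ℝ} (hl : ∀ i, 0 < l i) :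
    (V * diagonal (fun i => (l i : ℂ)) * Vᴴ).PosDef := by
  refine PosDef.mul_mul_conjTranspose_same (posDef_diagonal_iff.2 (by exact_mod_cast hl)) ?_
  intro x y hxy
  have := congrArg (fun z => z ᵥ* Vᴴ) hxy
  simpa [vecMul_vecMul, hV] using this

lemma trace_diag {V : Matrix m m ℂ} (hV : Vᴴ * V = 1) (l : m → ℝ) :
    (V * diagonal (fun i => (l i : ℂ)) * Vᴴ).trace.re = ∑ i, l i := by
  rw [trace_mul_cycle, hV, one_mul, trace_diagonal]
  simp

lemma mul_diag {V : Matrix m m ℂ} (hV : Vᴴ * V = 1) (l k : m → ℝ) :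
    (V * diagonal (fun i => (l i : ℂ)) * Vᴴ) * (V * diagonal (fun i => (k i : ℂ)) * Vᴴ) =
     V * diagonal (fun i => ((l i * k i : ℝ) : ℂ)) * Vᴴ := by
  calc _ = V * diagonal (fun i => (l i : ℂ)) * (Vᴴ * V) * diagonal (fun i => (k i : ℂ)) * Vᴴ := by
        simp only [mul_assoc]
    _ = _ := by rw [hV, mul_one, mul_assoc V, diagonal_mul_diagonal]; simp

lemma one_eq_diag {V : Matrix m m ℂ} (hV : V * Vᴴ = 1) :
    (1 : Matrix m m ℂ) = V * diagonal (fun _ => ((1:ℝ) : ℂ)) * Vᴴ := by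
  simp [hV]

lemma add_diag (V : Matrix m m ℂ) (l k : m → ℝ) :
    (V * diagonal (fun i => (l i : ℂ)) * Vᴴ) + (V * diagonal (fun i => (k i : ℂ)) * Vᴴ) =
     V * diagonal (fun i => ((l i + k i : ℝ) : ℂ)) * Vᴴ := by
  rw [← add_mul, ← mul_add, diagonal_add]; simp

lemma smul_diag (V : Matrix m m ℂ) (r : ℝ) (k : m → ℝ) :
    r • (V * diagonal (fun i => (k i : ℂ)) * Vᴴ) =
     V * diagonal (fun i => ((r * k i : ℝ) : ℂ)) * Vᴴ := by
  rw [← Matrix.smul_mul, ← Matrix.mul_smul]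
  congr 2
  ext i j
  by_cases h : i = j
  · subst h; simp
  · simp [h]

lemma mpow_psd {M : Matrix m m ℂ} (hM : M.PosSemidef) (c : ℝ) : (mpow M c).PosSemidef := by
  obtain ⟨V, l, h1, h2, h3, rfl⟩ := exists_diag_psd hM
  rw [mpow_diag h1]
  exact psd_diag V fun i => Real.rpow_nonneg (h3 i) c

lemma mpow_pd {M : Matrix m m ℂ} (hM : M.PosDef) (c : ℝ) : (mpow M c).PosDef := by
  obtain ⟨V, l, h1, h2, h3, rfl⟩ := exists_diag_pd hM
  rw [mpow_diag h1]
  exact pd_diag h2 fun i => Real.rpow_pos_of_pos (h3 i) c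

lemma mpow_mul_mpow {M : Matrix m m ℂ} (hM : M.PosDef) (a b : ℝ) :
    mpow M a * mpow M b = mpow M (a + b) := by
  obtain ⟨V, l, h1, h2, h3, rfl⟩ := exists_diag_pd hM
  rw [mpow_diag h1, mpow_diag h1, mpow_diag h1, mul_diag h1]
  simp only [Real.rpow_add (h3 _)]

lemma mpow_zero' {M : Matrix m m ℂ} (hM : M.PosDef) : mpow M 0 = 1 := by
  obtain ⟨V, l, h1, h2, h3, rfl⟩ := exists_diag_pd hM
  rw [mpow_diag h1, one_eq_diag h2]
  simp

lemma mpow_one' {M : Matrix m m ℂ} (hM : M.PosSemidef) : mpow M 1 = M := by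
  obtain ⟨V, l, h1, h2, h3, rfl⟩ := exists_diag_psd hM
  rw [mpow_diag h1]
  simp

lemma mpow_mpow {M : Matrix m m ℂ} (hM : M.PosSemidef) (a b : ℝ) :
    mpow (mpow M a) b = mpow M (a * b) := by
  obtain ⟨V, l, h1, h2, h3, rfl⟩ := exists_diag_psd hM
  rw [mpow_diag h1, mpow_diag h1, mpow_diag h1]
  simp only [Real.rpow_mul (h3 _)]

lemma mpow_smul {M : Matrix m m ℂ} (hM : M.PosSemidef) {r : ℝ} (hr : 0 ≤ r) (c : ℝ) :
    mpow (r • M) c = r ^ c • mpow M c := by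
  obtain ⟨V, l, h1, h2, h3, rfl⟩ := exists_diag_psd hM
  rw [smul_diag, mpow_diag h1, mpow_diag h1, smul_diag]
  simp only [Real.mul_rpow hr (h3 _)]

lemma mpow_neg_one {M : Matrix m m ℂ} (hM : M.PosDef) : mpow M (-1) = M⁻¹ := by
  symm
  apply inv_eq_right_inv
  conv_lhs => rw [← mpow_one' hM.posSemidef, mpow_mpow hM.posSemidef, mpow_mul_mpow hM]
  norm_num
  exact mpow_zero' hM

lemma mpow_conj {U M : Matrix m m ℂ} (hU : Uᴴ * U = 1) (hM : M.IsHermitian) (c : ℝ) :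
    mpow (U * M * Uᴴ) c = U * mpow M c * Uᴴ := by
  obtain ⟨V, l, h1, h2, rfl⟩ := exists_diag hM
  have key : ∀ D, U * (V * D * Vᴴ) * Uᴴ = (U * V) * D * (U * V)ᴴ := by
    intro D; rw [conjTranspose_mul]; simp only [mul_assoc]
  rw [mpow_diag h1, key, key, mpow_diag]
  rw [conjTranspose_mul]
  calc _ = Vᴴ * (Uᴴ * U) * V := by simp only [mul_assoc]
    _ = 1 := by rw [hU, mul_one, h1]

lemma mpow_submatrix {M : Matrix m m ℂ} (hM : M.IsHermitian) (e : n ≃ m) (c : ℝ) :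
    mpow (M.submatrix e e) c = (mpow M c).submatrix e e := by
  obtain ⟨V, l, h1, h2, rfl⟩ := exists_diag hM
  have key : ∀ f : m → ℂ, (V * diagonal f * Vᴴ).submatrix e e =
      V.submatrix e e * diagonal (fun i => f (e i)) * (V.submatrix e e)ᴴ := by
    intro f
    rw [← submatrix_mul_equiv _ _ e e e, ← submatrix_mul_equiv _ _ e e e, submatrix_diagonal_equiv]
    rfl
  rw [mpow_diag h1, key, key, mpow_diag (l := fun i => l (e i))]
  rw [conjTranspose_submatrix, submatrix_mul_equiv, h1, submatrix_one_equiv]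

lemma mpow_kronecker {M : Matrix m m ℂ} {N : Matrix n n ℂ} (hM : M.PosSemidef)
    (hN : N.PosSemidef) (c : ℝ) :
    mpow (M ⊗ₖ N) c = mpow M c ⊗ₖ mpow N c := by
  obtain ⟨V, l, h1, h2, h3, rfl⟩ := exists_diag_psd hM
  obtain ⟨W, k, g1, g2, g3, rfl⟩ := exists_diag_psd hN
  have key : ∀ (f : m → ℝ) (g : n → ℝ),
      (V * diagonal (fun i => (f i : ℂ)) * Vᴴ) ⊗ₖ (W * diagonal (fun i => (g i : ℂ)) * Wᴴ) =
      (V ⊗ₖ W) * diagonal (fun i => ((f i.1 * g i.2 : ℝ) : ℂ)) * (V ⊗ₖ W)ᴴ := by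
    intro f g
    rw [mul_kronecker_mul, mul_kronecker_mul, diagonal_kronecker_diagonal, conjTranspose_kronecker]
    simp
  rw [mpow_diag h1, mpow_diag g1, key, key, mpow_diag]
  · simp only [Real.mul_rpow (h3 _) (g3 _)]
  · rw [conjTranspose_kronecker, ← mul_kronecker_mul, h1, g1, one_kronecker_one]

end Spectral

/-! ### Block-diagonal matrices and traces of powers -/

section BlockDiag
variable {A m n k : Type*} [Fintype A] [DecidableEq A] [Fintype m] [DecidableEq m]
  [Fintype n] [DecidableEq n] [Fintype k] [DecidableEq k]

/-- The block-diagonal matrix on `A × m`, `A × n` with blocks `X x`, `x : A`. -/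
def bd (X : A → Matrix m n ℂ) : Matrix (A × m) (A × n) ℂ :=
  Matrix.of fun p q => if p.1 = q.1 then X p.1 p.2 q.2 else 0

omit [Fintype m] [DecidableEq m] [DecidableEq n] [Fintype k] [DecidableEq k] in
lemma bd_mul (X : A → Matrix m n ℂ) (Y : A → Matrix n k ℂ) :
    bd X * bd Y = bd fun x => X x * Y x := by
  ext p q
  simp only [bd, mul_apply, of_apply, Fintype.sum_prod_type]
  rw [Finset.sum_eq_single p.1]
  · by_cases h : p.1 = q.1 <;> simp [h]
  · intro b _ hb; simp [Ne.symm hb]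
  · simp

omit [Fintype A] [Fintype m] [DecidableEq m] [Fintype n] [DecidableEq n] in
lemma bd_conjTranspose (X : A → Matrix m n ℂ) : (bd X)ᴴ = bd fun x => (X x)ᴴ := by
  ext p q
  simp only [bd, conjTranspose_apply, of_apply]
  by_cases h : p.1 = q.1
  · simp [h]
  · simp [h, Ne.symm h]

omit [Fintype A] [Fintype m] in
lemma bd_one : bd (fun _ : A => (1 : Matrix m m ℂ)) = 1 := by
  ext p q
  simp only [bd, of_apply, one_apply, Prod.ext_iff]
  split_ifs <;> simp_all

omit [Fintype A] [Fintype m] [DecidableEq m] in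
lemma one_kron_eq_bd (M : Matrix m m ℂ) : (1 : Matrix A A ℂ) ⊗ₖ M = bd fun _ => M := by
  ext p q
  simp [bd, one_apply]

omit [DecidableEq m] in
lemma bd_trace (X : A → Matrix m m ℂ) : (bd X).trace = ∑ x, (X x).trace := by
  simp [bd, trace, Fintype.sum_prod_type]

omit [Fintype A] [Fintype m] in
lemma bd_diagonal (l : A → m → ℝ) : bd (fun x => diagonal fun i => (l x i : ℂ)) =
    diagonal fun p : A × m => (l p.1 p.2 : ℂ) := by
  ext p q
  simp only [bd, of_apply, diagonal_apply, Prod.ext_iff]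
  split_ifs <;> simp_all

lemma mpow_bd {X : A → Matrix m m ℂ} (hX : ∀ x, (X x).IsHermitian) (c : ℝ) :
    mpow (bd X) c = bd fun x => mpow (X x) c := by
  choose V l h1 h2 h3 using fun x => exists_diag (hX x)
  have key : ∀ f : A → m → ℝ, bd (fun x => V x * diagonal (fun i => (f x i : ℂ)) * (V x)ᴴ) =
      bd V * diagonal (fun p : A × m => (f p.1 p.2 : ℂ)) * (bd V)ᴴ := by
    intro f
    rw [bd_conjTranspose, ← bd_diagonal, bd_mul, bd_mul]
  have e1 : X = fun x => V x * diagonal (fun i => (l x i : ℂ)) * (V x)ᴴ := funext h3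
  have e2 : (fun x => mpow (X x) c) =
      fun x => V x * diagonal (fun i => ((l x i ^ c : ℝ) : ℂ)) * (V x)ᴴ := by
    ext1 x
    conv_lhs => rw [h3 x]
    rw [mpow_diag (h1 x)]
  rw [e2, key, e1, key, mpow_diag]
  rw [bd_conjTranspose, bd_mul]
  simp only [h1, bd_one]

omit [Fintype A] in
lemma psd_bd [Finite A] {X : A → Matrix m m ℂ} (hX : ∀ x, (X x).PosSemidef) : (bd X).PosSemidef := by
  have := Fintype.ofFinite A
  choose V l h1 h2 h3 h4 using fun x => exists_diag_psd (hX x)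
  have e1 : X = fun x => V x * diagonal (fun i => (l x i : ℂ)) * (V x)ᴴ := funext h4
  have key : ∀ f : A → m → ℝ, bd (fun x => V x * diagonal (fun i => (f x i : ℂ)) * (V x)ᴴ) =
      bd V * diagonal (fun p : A × m => (f p.1 p.2 : ℂ)) * (bd V)ᴴ := by
    intro f
    rw [bd_conjTranspose, ← bd_diagonal, bd_mul, bd_mul]
  rw [e1, key]
  exact psd_diag _ fun i => h3 _ _

/-- `X X†` and the transpose of `X† X` have the same nonzero eigenvalues with multiplicity, so
their powers have the same trace. -/
lemma trace_mpow_swap (X : Matrix m n ℂ) {γ : ℝ} (hγ : γ ≠ 0) :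
    (mpow (X * Xᴴ) γ).trace = (mpow (Xᴴ * X)ᵀ γ).trace := by
  have hP := isHermitian_mul_conjTranspose_self X
  have hQ : (Xᴴ * X)ᵀ.IsHermitian := (isHermitian_conjTranspose_mul_self X).transpose
  obtain ⟨p, hp⟩ := mpow_interp
    ({0} ∪ (Finset.univ.image hP.eigenvalues ∪ Finset.univ.image hQ.eigenvalues)) γ
  rw [mpow_eq_aeval hP γ p fun i => hp _ (by simp), mpow_eq_aeval hQ γ p fun i => hp _ (by simp)]
  have h0 : p.coeff 0 = 0 := by
    rw [Polynomial.coeff_zero_eq_eval_zero, hp 0 (by simp), Real.zero_rpow hγ]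
  rw [Polynomial.aeval_eq_sum_range, Polynomial.aeval_eq_sum_range, trace_sum, trace_sum]
  refine Finset.sum_congr rfl fun j _ => ?_
  rcases j with _ | j
  · simp [h0]
  · have key : ∀ j : ℕ, (X * Xᴴ) ^ (j + 1) = X * (Xᴴ * X) ^ j * Xᴴ := by
      intro j
      induction j with
      | zero => simp
      | succ j ih => rw [pow_succ, ih, pow_succ]; simp only [Matrix.mul_assoc]
    rw [trace_smul, trace_smul, ← transpose_pow, trace_transpose, key, trace_mul_comm,
      ← Matrix.mul_assoc, pow_succ']

end BlockDiag

section TracePow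
variable {m n : Type*} [Fintype m] [DecidableEq m] [Fintype n] [DecidableEq n]

/-- The real number `tr (M ^ c)`. -/
noncomputable def ptr (M : Matrix m m ℂ) (c : ℝ) : ℝ := (mpow M c).trace.re

lemma ptr_nonneg {M : Matrix m m ℂ} (hM : M.PosSemidef) (c : ℝ) : 0 ≤ ptr M c := by
  have := (mpow_psd hM c).trace_nonneg
  exact (Complex.le_def.1 this).1

lemma ptr_diag {V : Matrix m m ℂ} (hV : Vᴴ * V = 1) (l : m → ℝ) (c : ℝ) :
    ptr (V * diagonal (fun i => (l i : ℂ)) * Vᴴ) c = ∑ i, l i ^ c := by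
  rw [ptr, mpow_diag hV, trace_diag hV]

/-- For `0 < c`, a positive semidefinite matrix of trace at most one satisfies
`tr (M ^ c) ≤ dim`. -/
lemma ptr_le_card {M : Matrix m m ℂ} (hM : M.PosSemidef) {c : ℝ} (hc : 0 < c)
    (h : M.trace.re ≤ 1) : ptr M c ≤ Fintype.card m := by
  obtain ⟨V, l, h1, h2, h3, rfl⟩ := exists_diag_psd hM
  rw [trace_diag h1] at h
  rw [ptr_diag h1]
  calc ∑ i, l i ^ c ≤ ∑ _i : m, (1:ℝ) := by
        refine Finset.sum_le_sum fun i _ => Real.rpow_le_one (h3 i) ?_ hc.le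
        exact (Finset.single_le_sum (fun i _ => h3 i) (Finset.mem_univ i)).trans h
    _ = _ := by simp

/-- The largest eigenvalue is at least the average one. -/
lemma le_ptr {M : Matrix m m ℂ} (hM : M.PosSemidef) {c : ℝ} (hc : 0 < c)
    {r : ℝ} (hr : 0 ≤ r) (h : Fintype.card m * r ≤ M.trace.re) (hm : 0 < M.trace.re) :
    r ^ c ≤ ptr M c := by
  obtain ⟨V, l, h1, h2, h3, rfl⟩ := exists_diag_psd hM
  rw [trace_diag h1] at h hm
  rw [ptr_diag h1]
  obtain ⟨i, hi⟩ : ∃ i, r ≤ l i := by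
    by_contra! hcon
    have hne : Nonempty m := by
      by_contra h0
      rw [not_nonempty_iff] at h0
      simp at hm
    have := Finset.sum_lt_sum_of_nonempty (s := Finset.univ) Finset.univ_nonempty (fun i _ => hcon i)
    simp at this
    linarith
  calc r ^ c ≤ l i ^ c := Real.rpow_le_rpow hr hi hc.le
    _ ≤ _ := Finset.single_le_sum (f := fun i => l i ^ c)
      (fun i _ => Real.rpow_nonneg (h3 i) c) (Finset.mem_univ i)

lemma exists_mul_conjTranspose {M : Matrix m m ℂ} (hM : M.PosSemidef) :
    ∃ R : Matrix m m ℂ, M = R * Rᴴ := by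
  obtain ⟨V, l, h1, h2, h3, rfl⟩ := exists_diag_psd hM
  refine ⟨V * diagonal (fun i => ((Real.sqrt (l i) : ℝ) : ℂ)) * Vᴴ, ?_⟩
  rw [isHermitian_diag V (fun i => Real.sqrt (l i)), mul_diag h1]
  simp only [Real.mul_self_sqrt (h3 _)]

lemma trace_mul_re_nonneg {P Q : Matrix m m ℂ} (hP : P.PosSemidef) (hQ : Q.PosSemidef) :
    0 ≤ (P * Q).trace.re := by
  obtain ⟨R, rfl⟩ := exists_mul_conjTranspose hQ
  rw [← Matrix.mul_assoc, trace_mul_comm, ← Matrix.mul_assoc]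
  have := (hP.conjTranspose_mul_mul_same R).trace_nonneg
  exact (Complex.le_def.1 this).1

lemma trace_mul_re_mono {P P' Q : Matrix m m ℂ} (hP : (P' - P).PosSemidef) (hQ : Q.PosSemidef) :
    (P * Q).trace.re ≤ (P' * Q).trace.re := by
  have := trace_mul_re_nonneg hP hQ
  rw [sub_mul, trace_sub, Complex.sub_re] at this
  linarith

end TracePow

/-! ### Operator monotonicity, concavity and continuity of powers -/

section Analytic
open scoped Matrix.Norms.L2Operator MatrixOrder
variable {m n : Type*} [Fintype m] [DecidableEq m] [Fintype n] [DecidableEq n]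

lemma mpow_eq_rpow {M : Matrix m m ℂ} (hM : M.PosSemidef) (c : ℝ) : mpow M c = M ^ c := by
  rw [mpow, dif_pos hM.1, CFC.rpow_eq_cfc_real (nonneg_iff_posSemidef.2 hM), hM.1.cfc_eq]

/-- Löwner–Heinz inequality. -/
lemma mpow_mono {M N : Matrix m m ℂ} (hM : M.PosSemidef) (h : (N - M).PosSemidef) {t : ℝ}
    (ht : t ∈ Set.Icc (0:ℝ) 1) : (mpow N t - mpow M t).PosSemidef := by
  have hN : N.PosSemidef := by simpa using h.add hM
  rw [mpow_eq_rpow hM, mpow_eq_rpow hN]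
  exact CFC.rpow_le_rpow ht (le_iff.2 h)

/-- Operator concavity of `t`-th powers. -/
lemma mpow_concave {M N : Matrix m m ℂ} (hM : M.PosSemidef) (hN : N.PosSemidef) {t : ℝ}
    (ht : t ∈ Set.Icc (0:ℝ) 1) {a b : ℝ} (ha : 0 ≤ a) (hb : 0 ≤ b) (hab : a + b = 1) :
    (mpow (a • M + b • N) t - (a • mpow M t + b • mpow N t)).PosSemidef := by
  have hMN : (a • M + b • N).PosSemidef := (hM.smul ha).add (hN.smul hb)
  rw [mpow_eq_rpow hM, mpow_eq_rpow hN, mpow_eq_rpow hMN]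
  exact (CFC.concaveOn_rpow ht).2 (Set.mem_Ici.2 (nonneg_iff_posSemidef.2 hM))
    (Set.mem_Ici.2 (nonneg_iff_posSemidef.2 hN)) ha hb hab

lemma ringInverse_eq {M : Matrix m m ℂ} : Ring.inverse M = M⁻¹ := (nonsing_inv_eq_ringInverse M).symm

lemma inv_anti {M N : Matrix m m ℂ} (hM : M.PosDef) (h : (N - M).PosSemidef) :
    (M⁻¹ - N⁻¹).PosSemidef := by
  have hN : N.PosDef := by simpa using hM.add_posSemidef h
  have := CStarAlgebra.antitoneOn_ringInverse (A := Matrix m m ℂ)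
    (isStrictlyPositive_iff_posDef.2 hM) (isStrictlyPositive_iff_posDef.2 hN) (le_iff.2 h)
  rw [ringInverse_eq, ringInverse_eq] at this
  exact le_iff.1 this

lemma inv_convex {M N : Matrix m m ℂ} (hM : M.PosDef) (hN : N.PosDef)
    {a b : ℝ} (ha : 0 ≤ a) (hb : 0 ≤ b) (hab : a + b = 1) :
    (a • M⁻¹ + b • N⁻¹ - (a • M + b • N)⁻¹).PosSemidef := by
  have := (CStarAlgebra.convexOn_ringInverse (A := Matrix m m ℂ)).2
    (isStrictlyPositive_iff_posDef.2 hM) (isStrictlyPositive_iff_posDef.2 hN) ha hb hab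
  simp only [ringInverse_eq] at this
  exact this

omit [Fintype m] [DecidableEq m] in
lemma posDef_comb {M N : Matrix m m ℂ} (hM : M.PosDef) (hN : N.PosDef)
    {a b : ℝ} (ha : 0 ≤ a) (hb : 0 ≤ b) (hab : a + b = 1) : (a • M + b • N).PosDef := by
  rcases ha.eq_or_lt with rfl | ha
  · simp only [zero_add] at hab; simpa [hab] using hN
  · exact (hM.smul ha).add_posSemidef (hN.posSemidef.smul hb)

lemma mpow_neg_eq {M : Matrix m m ℂ} (hM : M.PosDef) (t : ℝ) : mpow M (-t) = (mpow M t)⁻¹ := by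
  rw [← mpow_neg_one (mpow_pd hM t), mpow_mpow hM.posSemidef, mul_neg_one]

/-- Operator convexity of `M ↦ M ^ (-t)`: combine convexity and antitonicity of the inverse with
operator concavity of the `t`-th power. -/
lemma mpow_neg_convex {M N : Matrix m m ℂ} (hM : M.PosDef) (hN : N.PosDef) {t : ℝ}
    (ht : t ∈ Set.Icc (0:ℝ) 1) {a b : ℝ} (ha : 0 ≤ a) (hb : 0 ≤ b) (hab : a + b = 1) :
    ((a • mpow M (-t) + b • mpow N (-t)) - mpow (a • M + b • N) (-t)).PosSemidef := by
  have hMN := posDef_comb hM hN ha hb hab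
  rw [mpow_neg_eq hM, mpow_neg_eq hN, mpow_neg_eq hMN]
  have h1 := inv_convex (mpow_pd hM t) (mpow_pd hN t) ha hb hab
  have h2 := inv_anti (posDef_comb (mpow_pd hM t) (mpow_pd hN t) ha hb hab)
    (mpow_concave hM.posSemidef hN.posSemidef ht ha hb hab)
  simpa using h1.add h2

lemma continuousOn_mpow {t : ℝ} (ht : 0 ≤ t) :
    ContinuousOn (fun M : Matrix m m ℂ => mpow M t) {M | M.PosSemidef} := by
  have : ContinuousOn (fun M : Matrix m m ℂ => M ^ t) {M | M.PosSemidef} := by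
    have h := ContinuousOn.cfc_nnreal_of_mem_nhdsSet (A := Matrix m m ℂ) (s := Set.univ)
      (fun x : NNReal => x ^ t) (a := fun M : Matrix m m ℂ => M) (t := {M | M.PosSemidef}) Filter.univ_mem
      continuousOn_id (fun x hx => nonneg_iff_posSemidef.2 hx)
      (NNReal.continuous_rpow_const ht).continuousOn
    simpa only [CFC.rpow_def] using h
  exact this.congr fun M hM => mpow_eq_rpow hM t

lemma continuousOn_mpow_neg {t : ℝ} (ht : 0 ≤ t) :
    ContinuousOn (fun M : Matrix m m ℂ => mpow M (-t)) {M | M.PosDef} := by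
  have h1 : ContinuousOn (fun M : Matrix m m ℂ => mpow M t) {M | M.PosDef} :=
    (continuousOn_mpow ht).mono fun M hM => PosDef.posSemidef hM
  have : ContinuousOn (fun M : Matrix m m ℂ => (mpow M t)⁻¹) {M | M.PosDef} := by
    intro M hM
    refine ContinuousAt.comp_continuousWithinAt (g := fun N : Matrix m m ℂ => N⁻¹) ?_ (h1 M hM)
    refine continuousAt_matrix_inv _ ?_
    rw [Ring.inverse_eq_inv']
    exact continuousAt_inv₀ (PosDef.det_pos (mpow_pd hM t)).ne'
  exact this.congr fun M hM => mpow_neg_eq hM t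

end Analytic

/-! ### The minimax witness -/

section Minimax
variable {A F C : Type*} [Fintype A] [DecidableEq A] [Fintype F] [DecidableEq F]
  [Fintype C] [DecidableEq C]

/-- Families of positive semidefinite matrices with total trace one: classical-quantum states. -/
def cqStates (A F : Type*) [Fintype A] [Fintype F] : Set (A → Matrix F F ℂ) :=
  {ω | (∀ y, (ω y).PosSemidef) ∧ ∑ y, (ω y).trace.re = 1}

open scoped Matrix.Norms.L2Operator MatrixOrder in
omit [DecidableEq A] in
lemma isCompact_cqStates : IsCompact (cqStates A F) := by
  have hp : ProperSpace (A → Matrix F F ℂ) := FiniteDimensional.proper ℝ _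
  refine Metric.isCompact_of_isClosed_isBounded ?_ ?_
  · have h1 : IsClosed {M : Matrix F F ℂ | M.PosSemidef} := by
      have : IsClosed {M : Matrix F F ℂ | 0 ≤ M} := CStarAlgebra.isClosed_nonneg
      simpa only [nonneg_iff_posSemidef]
    have e : cqStates A F = (⋂ y, (fun ω : A → Matrix F F ℂ => ω y) ⁻¹' {M | M.PosSemidef}) ∩
        (fun ω : A → Matrix F F ℂ => ∑ y, (ω y).trace.re) ⁻¹' {1} := by
      ext ω; simp [cqStates]
    rw [e]
    refine (isClosed_iInter fun y => h1.preimage (continuous_apply y)).inter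
      (isClosed_singleton.preimage ?_)
    refine continuous_finsetSum _ fun y _ => ?_
    exact Complex.continuous_re.comp ((continuous_apply y).matrix_trace)
  · refine (Metric.isBounded_closedBall (x := (0 : A → Matrix F F ℂ)) (r := 1)).subset ?_
    intro ω hω
    rw [mem_closedBall_zero_iff, pi_norm_le_iff_of_nonneg zero_le_one]
    intro y
    have hy : (ω y).trace.re ≤ 1 := by
      rw [← hω.2]
      refine Finset.single_le_sum (f := fun y => (ω y).trace.re) (fun z _ => ?_) (Finset.mem_univ y)
      exact (Complex.le_def.1 (hω.1 z).trace_nonneg).1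
    rw [CStarAlgebra.norm_le_iff_le_algebraMap _ zero_le_one (nonneg_iff_posSemidef.2 (hω.1 y)),
      map_one, le_iff]
    obtain ⟨V, l, h1, h2, h3, h4⟩ := exists_diag_psd (hω.1 y)
    have : (1 : Matrix F F ℂ) - ω y = V * diagonal (fun i => ((1 - l i : ℝ) : ℂ)) * Vᴴ := by
      rw [sub_eq_iff_eq_add]
      conv_rhs => rw [h4, add_diag]
      rw [one_eq_diag h2]; simp
    rw [this]
    refine psd_diag _ fun i => ?_
    rw [h4, trace_diag h1] at hy
    linarith [Finset.single_le_sum (fun i _ => h3 i) (Finset.mem_univ i)]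

omit [DecidableEq A] [DecidableEq F] in
lemma convex_cqStates : Convex ℝ (cqStates A F) := by
  intro ω hω ω' hω' a b ha hb hab
  refine ⟨fun y => ((hω.1 y).smul ha).add ((hω'.1 y).smul hb), ?_⟩
  have : ∀ y, ((a • ω + b • ω') y).trace.re = a * (ω y).trace.re + b * (ω' y).trace.re := by
    intro y
    simp [trace_add, trace_smul]
  simp only [this, Finset.sum_add_distrib, ← Finset.mul_sum, hω.2, hω'.2, mul_one, hab]

omit [DecidableEq A] in
/-- Hölder duality for exponent `β > 1`: the maximising state is proportional to `W ^ β`. -/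
lemma exists_state_attaining {β t : ℝ} (hβ : 1 < β) (ht : t = (β - 1) / β)
    (W : A → Matrix F F ℂ) (hW : ∀ y, (W y).PosSemidef) (hZ : 0 < ∑ y, ptr (W y) β) :
    ∃ ω ∈ cqStates A F, ∑ y, (mpow (ω y) t * W y).trace.re = (∑ y, ptr (W y) β) ^ (1 / β) := by
  set Z := ∑ y, ptr (W y) β with hZdef
  have hβt : β * t = β - 1 := by rw [ht]; field_simp
  refine ⟨fun y => Z⁻¹ • mpow (W y) β,
    ⟨fun y => (mpow_psd (hW y) β).smul (inv_nonneg.2 hZ.le), ?_⟩, ?_⟩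
  · have : ∀ y, (Z⁻¹ • mpow (W y) β).trace.re = Z⁻¹ * ptr (W y) β := by
      intro y; simp [trace_smul, ptr]
    simp only [this, ← Finset.mul_sum, ← hZdef]
    exact inv_mul_cancel₀ hZ.ne'
  · have : ∀ y, (mpow (Z⁻¹ • mpow (W y) β) t * W y).trace.re = Z⁻¹ ^ t * ptr (W y) β := by
      intro y
      rw [mpow_smul (mpow_psd (hW y) β) (inv_nonneg.2 hZ.le), mpow_mpow (hW y), hβt]
      have e : mpow (W y) (β - 1) * W y = mpow (W y) β := by
        obtain ⟨V, l, h1, h2, h3, h4⟩ := exists_diag_psd (hW y)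
        rw [h4, mpow_diag h1, mpow_diag h1, mul_diag h1]
        congr 3
        ext i
        congr 1
        conv_lhs => rw [← Real.rpow_one (l i), ← Real.rpow_mul (h3 i), one_mul]
        rw [← Real.rpow_add' (h3 i) (by linarith)]
        congr 1; ring
      rw [Matrix.smul_mul, e, trace_smul]
      simp [ptr]
    simp only [this, ← Finset.mul_sum, ← hZdef]
    rw [Real.inv_rpow hZ.le, ← Real.rpow_neg hZ.le]
    nth_rewrite 2 [← Real.rpow_one Z]
    rw [← Real.rpow_add hZ]
    congr 1
    rw [ht]; field_simp; ring

/-- The positive semidefinite operator `(T_y† σ^r T_y)ᵀ` on the purifying system `F`. The transpose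
makes `tr (ω W)` the value of the quadratic form of `ω ⊗ σ^r` at the vector with coefficients
`T_y`. -/
noncomputable def wMat (T : A → Matrix C F ℂ) (r : ℝ) (σ : Matrix C C ℂ) (y : A) : Matrix F F ℂ :=
  ((T y)ᴴ * mpow σ r * T y)ᵀ

omit [Fintype A] [DecidableEq A] [DecidableEq F] in
lemma wMat_psd (T : A → Matrix C F ℂ) (r : ℝ) {σ : Matrix C C ℂ} (hσ : σ.PosSemidef) (y : A) :
    (wMat T r σ y).PosSemidef :=
  ((mpow_psd hσ r).conjTranspose_mul_mul_same (T y)).transpose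

omit [DecidableEq A] in
/-- Minimax step: a lower bound on `Q_β(σ)^{1/β}` valid for all `σ` is witnessed by a single `ω`.
The function `(ω, σ) ↦ ∑ tr (ω_y^t W_y(σ))` is concave and continuous in `ω` on a compact convex
set, and convex and continuous in `σ`, so Sion's theorem applies. -/
lemma exists_state_minimax {β t L : ℝ} (hβ : 1 < β) (ht : t = (β - 1) / β)
    (T : A → Matrix C F ℂ)
    (hZ : ∀ σ : Matrix C C ℂ, σ.PosDef → σ.trace = 1 → 0 < ∑ y, ptr (wMat T (-t) σ y) β)
    (hL : ∀ σ : Matrix C C ℂ, σ.PosDef → σ.trace = 1 →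
      L ≤ (∑ y, ptr (wMat T (-t) σ y) β) ^ (1 / β))
    (hne : (cqStates A F).Nonempty) :
    ∃ ω ∈ cqStates A F, ∀ σ : Matrix C C ℂ, σ.PosDef → σ.trace = 1 →
      L ≤ ∑ y, (mpow (ω y) t * wMat T (-t) σ y).trace.re := by
  have ht0 : t ∈ Set.Icc (0:ℝ) 1 := by
    rw [ht]; constructor
    · apply div_nonneg <;> linarith
    · rw [div_le_one (by linarith)]; linarith
  by_contra! hcon
  set Y : Set (Matrix C C ℂ) := {σ | σ.PosDef ∧ σ.trace = 1} with hY
  set f : (A → Matrix F F ℂ) → Matrix C C ℂ → ℝ :=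
    fun ω σ => ∑ y, (mpow (ω y) t * wMat T (-t) σ y).trace.re with hf
  have hYconv : Convex ℝ Y := by
    intro σ hσ σ' hσ' a b ha hb hab
    refine ⟨posDef_comb hσ.1 hσ'.1 ha hb hab, ?_⟩
    rw [trace_add, trace_smul, trace_smul, hσ.2, hσ'.2]
    simp only [Complex.real_smul, mul_one]
    exact_mod_cast hab
  have hcont : ∀ σ ∈ Y, ContinuousOn (fun ω => f ω σ) (cqStates A F) := by
    intro σ hσ
    refine continuousOn_finsetSum _ fun y _ => ?_
    have h1 : ContinuousOn (fun ω : A → Matrix F F ℂ => mpow (ω y) t) (cqStates A F) :=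
      (continuousOn_mpow ht0.1).comp (continuous_apply y).continuousOn fun ω hω => hω.1 y
    have h2 : Continuous fun M : Matrix F F ℂ => (M * wMat T (-t) σ y).trace.re :=
      Complex.continuous_re.comp (continuous_id.matrix_mul continuous_const).matrix_trace
    exact h2.comp_continuousOn h1
  have hcont' : ∀ ω, ContinuousOn (fun σ => f ω σ) Y := by
    intro ω
    refine continuousOn_finsetSum _ fun y _ => ?_
    have h1 : ContinuousOn (fun σ : Matrix C C ℂ => mpow σ (-t)) Y :=
      (continuousOn_mpow_neg ht0.1).mono fun σ hσ => hσ.1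
    have h2 : Continuous fun M : Matrix C C ℂ =>
        (mpow (ω y) t * ((T y)ᴴ * M * T y)ᵀ).trace.re :=
      Complex.continuous_re.comp (continuous_const.matrix_mul
        ((continuous_const.matrix_mul continuous_id).matrix_mul
          continuous_const).matrix_transpose).matrix_trace
    exact h2.comp_continuousOn h1
  have hconc : ∀ σ ∈ Y, ConcaveOn ℝ (cqStates A F) (fun ω => f ω σ) := by
    intro σ hσ
    refine ⟨convex_cqStates, fun ω hω ω' hω' a b ha hb hab => ?_⟩
    simp only [hf, smul_eq_mul, Finset.mul_sum, ← Finset.sum_add_distrib]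
    refine Finset.sum_le_sum fun y _ => ?_
    have := trace_mul_re_mono (mpow_concave (hω.1 y) (hω'.1 y) ht0 ha hb hab)
      (wMat_psd T (-t) hσ.1.posSemidef y)
    simpa [add_mul, trace_add, trace_smul] using this
  have hconv : ∀ ω ∈ cqStates A F, ConvexOn ℝ Y (fun σ => f ω σ) := by
    intro ω hω
    refine ⟨hYconv, fun σ hσ σ' hσ' a b ha hb hab => ?_⟩
    simp only [hf, smul_eq_mul, Finset.mul_sum, ← Finset.sum_add_distrib]
    refine Finset.sum_le_sum fun y _ => ?_
    have h1 := ((mpow_neg_convex hσ.1 hσ'.1 ht0 ha hb hab).conjTranspose_mul_mul_same (T y)).transpose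
    have := trace_mul_re_nonneg (mpow_psd (hω.1 y) t) h1
    simp only [Matrix.mul_sub, Matrix.sub_mul, transpose_sub, trace_sub, Complex.sub_re, Matrix.mul_add,
      Matrix.add_mul, transpose_add, trace_add, Complex.add_re, Matrix.mul_smul, Matrix.smul_mul,
      transpose_smul, trace_smul, Complex.smul_re, smul_eq_mul] at this
    simp only [wMat]
    linarith
  -- a finite subfamily of the `σ` already violates the bound for every `ω`
  have hopen : ∀ σ : Y, ∃ u : Set (A → Matrix F F ℂ), IsOpen u ∧
      (fun ω => f ω σ) ⁻¹' (Set.Iio L) ∩ cqStates A F = u ∩ cqStates A F :=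
    fun σ => (continuousOn_iff'.1 (hcont σ.1 σ.2)) _ isOpen_Iio
  choose u hu1 hu2 using hopen
  obtain ⟨s, hs⟩ := isCompact_cqStates.elim_finite_subcover u hu1 (by
    intro ω hω
    obtain ⟨σ, h1, h2, h3⟩ := hcon ω hω
    refine Set.mem_iUnion.2 ⟨⟨σ, h1, h2⟩, ?_⟩
    have : ω ∈ (fun ω => f ω σ) ⁻¹' (Set.Iio L) ∩ cqStates A F := ⟨h3, hω⟩
    rw [hu2 ⟨σ, h1, h2⟩] at this
    exact this.1)
  obtain ⟨σ0, hσ0, h0⟩ := Sion.exists_lt_iInf_of_lt_iInf_of_finite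
    (X := cqStates A F) (Y := Y) (f := fun ω σ => - f ω σ) hne isCompact_cqStates
    (fun σ hσ => (hcont σ hσ).neg.lowerSemicontinuousOn)
    (fun σ hσ => (hconc σ hσ).neg.quasiconvexOn) hYconv
    (fun ω _ => (hcont' ω).neg.upperSemicontinuousOn)
    (fun ω hω => (hconv ω hω).neg.quasiconcaveOn) convex_cqStates
    (s := Subtype.val '' (s : Set Y)) ((s.finite_toSet).image _)
    (by rintro _ ⟨σ, _, rfl⟩; exact σ.2) (t := -L) (by
      intro ω hω
      obtain ⟨σ, hσ, h⟩ := Set.mem_iUnion₂.1 (hs hω)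
      refine ⟨σ.1, ⟨σ, hσ, rfl⟩, ?_⟩
      have : ω ∈ u σ ∩ cqStates A F := ⟨h, hω⟩
      rw [← hu2 σ] at this
      have := this.1
      simp only [Set.mem_preimage, Set.mem_Iio] at this
      linarith)
  obtain ⟨ω, hω, h⟩ := exists_state_attaining hβ ht (wMat T (-t) σ0)
    (wMat_psd T (-t) hσ0.1.posSemidef) (hZ σ0 hσ0.1 hσ0.2)
  have h1 := h0 ω hω
  have h2 := hL σ0 hσ0.1 hσ0.2
  simp only [hf] at h1
  linarith

end Minimax

/-! ### Hölder duality below one, and the single-vector inequality -/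

section Dual
variable {A G : Type*} [Fintype A] [Nonempty A] [Fintype G] [DecidableEq G] [Nonempty G]

/-- Hölder duality for exponent `α < 1`: the minimising `ν` is proportional to `M ^ α`, and
is approximated here by the positive definite family `(M + ε) ^ α`. -/
lemma le_of_forall_state {α t r : ℝ} (hα0 : 0 < α) (ht : t = (1 - α) / α)
    (M : A → Matrix G G ℂ) (hM : ∀ x, (M x).PosSemidef)
    (h : ∀ ν : A → Matrix G G ℂ, (∀ x, (ν x).PosDef) → ∑ x, (ν x).trace.re = 1 →
      r ≤ ∑ x, (mpow (ν x) (-t) * M x).trace.re) :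
    r ≤ (∑ x, ptr (M x) α) ^ (1 / α) := by
  choose V l h1 h2 h3 h4 using fun x => exists_diag_psd (hM x)
  have hαt : α * -t = α - 1 := by rw [ht]; field_simp; ring
  have hlim : Filter.Tendsto (fun ε : ℝ => (∑ x, ∑ i, (l x i + ε) ^ α) ^ (1 / α))
      (nhdsWithin 0 (Set.Ioi 0)) (nhds ((∑ x, ptr (M x) α) ^ (1 / α))) := by
    have hc : Continuous fun ε : ℝ => (∑ x, ∑ i, (l x i + ε) ^ α) ^ (1 / α) := by
      refine Continuous.rpow_const ?_ fun _ => Or.inr (by positivity)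
      refine continuous_finsetSum _ fun x _ => continuous_finsetSum _ fun i _ => ?_
      exact (continuous_const.add continuous_id).rpow_const fun _ => Or.inr hα0.le
    have e : ∑ x, ptr (M x) α = ∑ x, ∑ i, (l x i + 0) ^ α := by
      refine Finset.sum_congr rfl fun x _ => ?_
      conv_lhs => rw [h4 x]
      rw [ptr_diag (h1 x)]
      simp
    rw [e]
    exact (hc.tendsto 0).mono_left nhdsWithin_le_nhds
  refine ge_of_tendsto hlim ?_
  filter_upwards [self_mem_nhdsWithin] with ε hε
  rw [Set.mem_Ioi] at hε
  set Z := ∑ x, ∑ i, (l x i + ε) ^ α with hZ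
  have hpos : ∀ x i, 0 < l x i + ε := fun x i => by linarith [h3 x i]
  have hZ0 : 0 < Z := Finset.sum_pos (fun x _ => Finset.sum_pos
    (fun i _ => Real.rpow_pos_of_pos (hpos x i) α) Finset.univ_nonempty) Finset.univ_nonempty
  have key := h (fun x => V x * diagonal (fun i => ((Z⁻¹ * (l x i + ε) ^ α : ℝ) : ℂ)) * (V x)ᴴ)
    (fun x => pd_diag (h2 x) fun i => mul_pos (inv_pos.2 hZ0) (Real.rpow_pos_of_pos (hpos x i) α))
    (by
      simp only [trace_diag (h1 _), ← Finset.mul_sum, ← hZ]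
      exact inv_mul_cancel₀ hZ0.ne')
  refine key.trans ?_
  have hterm : ∀ x, (mpow (V x * diagonal (fun i => ((Z⁻¹ * (l x i + ε) ^ α : ℝ) : ℂ)) * (V x)ᴴ) (-t)
      * M x).trace.re = ∑ i, (Z⁻¹ * (l x i + ε) ^ α) ^ (-t) * l x i := by
    intro x
    rw [mpow_diag (h1 x)]
    conv_lhs => rw [h4 x]
    rw [mul_diag (h1 x), trace_diag (h1 x)]
  simp only [hterm]
  have hle : ∀ x i, (Z⁻¹ * (l x i + ε) ^ α) ^ (-t) * l x i ≤ Z ^ t * (l x i + ε) ^ α := by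
    intro x i
    rw [Real.mul_rpow (inv_pos.2 hZ0).le (Real.rpow_nonneg (hpos x i).le _),
      Real.inv_rpow hZ0.le, Real.rpow_neg hZ0.le, inv_inv, ← Real.rpow_mul (hpos x i).le, hαt, mul_assoc]
    refine mul_le_mul_of_nonneg_left ?_ (Real.rpow_nonneg hZ0.le t)
    calc (l x i + ε) ^ (α - 1) * l x i ≤ (l x i + ε) ^ (α - 1) * (l x i + ε) := by
          refine mul_le_mul_of_nonneg_left (by linarith) (Real.rpow_nonneg (hpos x i).le _)
      _ = (l x i + ε) ^ α := by
          rw [Real.rpow_sub_one (hpos x i).ne', div_mul_cancel₀ _ (hpos x i).ne']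
  calc ∑ x, ∑ i, (Z⁻¹ * (l x i + ε) ^ α) ^ (-t) * l x i
      ≤ ∑ x, ∑ i, Z ^ t * (l x i + ε) ^ α :=
        Finset.sum_le_sum fun x _ => Finset.sum_le_sum fun i _ => hle x i
    _ = Z ^ t * Z := by simp only [← Finset.mul_sum, hZ]
    _ = Z ^ (1 / α) := by
        rw [← Real.rpow_add_one hZ0.ne']
        congr 1
        rw [ht]; field_simp; ring

end Dual

section Lowner
variable {A B C E : Type*} [Fintype A] [DecidableEq A] [Fintype B] [DecidableEq B]
  [Fintype C] [DecidableEq C] [Fintype E] [DecidableEq E]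

/-- Weighted Young inequality `2 Re⟨v, q⟩ ≤ ⟨v, ν v⟩ + ⟨q, ν⁻¹ q⟩`. -/
lemma young_form {G : Type*} [Fintype G] [DecidableEq G] {ν : Matrix G G ℂ} (hν : ν.PosDef)
    (v q : G → ℂ) :
    2 * (star v ⬝ᵥ q).re ≤ (star v ⬝ᵥ ν *ᵥ v).re + (star q ⬝ᵥ ν⁻¹ *ᵥ q).re := by
  have h0 := hν.posSemidef.re_dotProduct_nonneg (v - ν⁻¹ *ᵥ q)
  have hu : IsUnit ν.det := (isUnit_iff_isUnit_det ν).1 hν.isUnit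
  have e1 : ν *ᵥ (ν⁻¹ *ᵥ q) = q := by rw [mulVec_mulVec, mul_nonsing_inv _ hu, one_mulVec]
  have e2 : star (ν⁻¹ *ᵥ q) ⬝ᵥ (ν *ᵥ v) = star q ⬝ᵥ v := by
    rw [star_mulVec, ← dotProduct_mulVec, mulVec_mulVec, hν.inv.1, nonsing_inv_mul _ hu, one_mulVec]
  have e3 : star (ν⁻¹ *ᵥ q) ⬝ᵥ q = star q ⬝ᵥ (ν⁻¹ *ᵥ q) := by
    rw [star_mulVec, ← dotProduct_mulVec, hν.inv.1]
  have e4 : (star q ⬝ᵥ v).re = (star v ⬝ᵥ q).re := by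
    rw [star_dotProduct, Complex.star_def, Complex.conj_re]
  simp only [star_sub, mulVec_sub, e1, sub_dotProduct, dotProduct_sub, e2, e3, map_sub,
    RCLike.re_eq_complex_re] at h0
  linarith

omit [Fintype B] [DecidableEq B] [DecidableEq A] in
/-- The operator inequality behind the uncertainty relation, in the case of a single vector `p`.
It expresses `⟨p, σ⁻¹ p⟩ = ⟨w, p⟩` with `w = σ⁻¹ p`, splits this inner product over `x` and `e`, and
applies Young's inequality with weight `ν x` to each term. -/
lemma form_inv_le {c : ℝ} (hc : 0 < c) (ν : A → Matrix (C × E) (C × E) ℂ) (hν : ∀ x, (ν x).PosDef)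
    {σ : Matrix C C ℂ} (hσ : σ.PosDef) (hσν : ∀ i j, σ i j = ∑ x, ∑ e, ν x (i, e) (j, e))
    (u : A → ℂ) (hu : ∀ x, Complex.normSq (u x) ≤ c) (q : A → E → C × E → ℂ) (p : C → ℂ)
    (hp : ∀ i, p i = ∑ x, ∑ e, u x * q x e (i, e)) :
    (star p ⬝ᵥ σ⁻¹ *ᵥ p).re ≤ c * ∑ x, ∑ e, (star (q x e) ⬝ᵥ (ν x)⁻¹ *ᵥ q x e).re := by
  set w := σ⁻¹ *ᵥ p with hw
  set v : E → C × E → ℂ := fun e r => if r.2 = e then w r.1 else 0 with hv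
  have hsu : IsUnit σ.det := (isUnit_iff_isUnit_det σ).1 hσ.isUnit
  have e1 : σ *ᵥ w = p := by rw [hw, mulVec_mulVec, mul_nonsing_inv _ hsu, one_mulVec]
  have e2 : star w ⬝ᵥ p = star p ⬝ᵥ w := by
    rw [hw, star_mulVec, ← dotProduct_mulVec, hσ.inv.1]
  have ha : star w ⬝ᵥ p = ∑ x, ∑ e, u x * (star (v e) ⬝ᵥ q x e) := by
    have : ∀ x e, star (v e) ⬝ᵥ q x e = ∑ i, star (w i) * q x e (i, e) := by
      intro x e
      simp [dotProduct, hv, Fintype.sum_prod_type, apply_ite]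
    simp only [this]
    simp only [dotProduct, hp, Finset.mul_sum, Pi.star_apply]
    rw [Finset.sum_comm]
    refine Finset.sum_congr rfl fun x _ => ?_
    rw [Finset.sum_comm]
    refine Finset.sum_congr rfl fun e _ => Finset.sum_congr rfl fun i _ => ?_
    ring
  have hb : ∑ x, ∑ e, (star (v e) ⬝ᵥ ν x *ᵥ v e) = star w ⬝ᵥ σ *ᵥ w := by
    have : ∀ x e, star (v e) ⬝ᵥ ν x *ᵥ v e =
        ∑ i, ∑ j, star (w i) * (ν x (i, e) (j, e) * w j) := by
      intro x e
      simp [dotProduct, mulVec, hv, Fintype.sum_prod_type, apply_ite, Finset.mul_sum]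
    simp only [this]
    simp only [dotProduct, mulVec, hσν, Finset.mul_sum, Finset.sum_mul, Pi.star_apply]
    rw [Finset.sum_congr rfl fun x _ => Finset.sum_comm, Finset.sum_comm]
    refine Finset.sum_congr rfl fun i _ => ?_
    rw [Finset.sum_congr rfl fun x _ => Finset.sum_comm, Finset.sum_comm]
  have hy : ∀ x e, 2 * (u x * (star (v e) ⬝ᵥ q x e)).re ≤
      (star (v e) ⬝ᵥ ν x *ᵥ v e).re + c * (star (q x e) ⬝ᵥ (ν x)⁻¹ *ᵥ q x e).re := by
    intro x e
    -- the weight `1 / c` balances the two terms, since `‖u x‖² / c² ≤ 1 / c`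
    have h := young_form (hν x) ((star (u x) / c) • v e) (q x e)
    have hn : 0 ≤ (star (v e) ⬝ᵥ ν x *ᵥ v e).re := (hν x).posSemidef.re_dotProduct_nonneg (v e)
    have t1 : (star ((star (u x) / (c:ℂ)) • v e) ⬝ᵥ q x e) =
        ((1 / c : ℝ) : ℂ) * (u x * (star (v e) ⬝ᵥ q x e)) := by
      simp [star_smul, smul_dotProduct]; ring
    have t2 : (star ((star (u x) / (c:ℂ)) • v e) ⬝ᵥ ν x *ᵥ ((star (u x) / (c:ℂ)) • v e)) =
        ((Complex.normSq (u x) / c ^ 2 : ℝ) : ℂ) * (star (v e) ⬝ᵥ ν x *ᵥ v e) := by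
      rw [star_smul, smul_dotProduct, mulVec_smul, dotProduct_smul]
      simp only [smul_eq_mul, Complex.ofReal_div, ← Complex.mul_conj]
      simp; ring
    rw [t1, t2, Complex.re_ofReal_mul, Complex.re_ofReal_mul] at h
    have h3 : Complex.normSq (u x) / c ^ 2 * (star (v e) ⬝ᵥ ν x *ᵥ v e).re ≤
        1 / c * (star (v e) ⬝ᵥ ν x *ᵥ v e).re := by
      refine mul_le_mul_of_nonneg_right ?_ hn
      rw [div_le_div_iff₀ (by positivity) hc]
      nlinarith [hu x]
    have h4 := mul_le_mul_of_nonneg_left (h.trans (add_le_add_left h3 _)) hc.le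
    have : c * (1 / c) = 1 := by field_simp
    calc _ = c * (2 * (1 / c * (u x * (star (v e) ⬝ᵥ q x e)).re)) := by
          linear_combination (-2 * (u x * (star (v e) ⬝ᵥ q x e)).re) * this
      _ ≤ _ := h4
      _ = _ := by linear_combination (star (v e) ⬝ᵥ ν x *ᵥ v e).re * this
  have hsum := Finset.sum_le_sum fun x (_ : x ∈ Finset.univ) =>
    Finset.sum_le_sum fun e (_ : e ∈ (Finset.univ : Finset E)) => hy x e
  have ha' := congrArg Complex.re ha
  have hb' := congrArg Complex.re hb
  simp only [Complex.re_sum] at ha' hb'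
  simp only [Finset.sum_add_distrib, ← Finset.mul_sum, ← ha', hb', e1] at hsum
  rw [← e2]
  linarith

end Lowner

/-! ### The operator inequality as an inequality of quadratic forms -/

section Forms
variable {A m n : Type*} [Fintype A] [DecidableEq A] [Fintype m] [Fintype n]

lemma form_bd (X : A → Matrix m m ℂ) (h : A × m → ℂ) :
    star h ⬝ᵥ bd X *ᵥ h = ∑ y, star (fun i => h (y, i)) ⬝ᵥ X y *ᵥ (fun i => h (y, i)) := by
  simp only [dotProduct, mulVec, bd, of_apply, Fintype.sum_prod_type, Pi.star_apply]
  refine Finset.sum_congr rfl fun y _ => Finset.sum_congr rfl fun i _ => ?_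
  rw [Finset.sum_eq_single y]
  · simp
  · intro b _ hb; simp [Ne.symm hb]
  · simp

/-- The form of `P ⊗ Q` at a vector, written through the coefficient matrix `Z` of that vector. -/
lemma form_kron_left (P : Matrix m m ℂ) (Q : Matrix n n ℂ) (z : m × n → ℂ) (Z : Matrix n m ℂ)
    (hZ : ∀ i j, Z j i = z (i, j)) :
    star z ⬝ᵥ (P ⊗ₖ Q) *ᵥ z = (P * (Zᴴ * Q * Z)ᵀ).trace := by
  simp only [dotProduct, mulVec, Fintype.sum_prod_type, Pi.star_apply, trace, diag_apply, mul_apply,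
    transpose_apply, conjTranspose_apply, kroneckerMap_apply, hZ, Finset.mul_sum, Finset.sum_mul]
  refine Finset.sum_congr rfl fun i _ => ?_
  rw [Finset.sum_comm]
  refine Finset.sum_congr rfl fun i' _ => ?_
  rw [Finset.sum_comm]
  refine Finset.sum_congr rfl fun j' _ => Finset.sum_congr rfl fun j _ => ?_
  ring

lemma form_kron_right (P : Matrix m m ℂ) (Q : Matrix n n ℂ) (z : m × n → ℂ) (Z : Matrix m n ℂ)
    (hZ : ∀ i j, Z i j = z (i, j)) :
    star z ⬝ᵥ (P ⊗ₖ Q) *ᵥ z = (Q * (Zᴴ * P * Z)ᵀ).trace := by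
  simp only [dotProduct, mulVec, Fintype.sum_prod_type, Pi.star_apply, trace, diag_apply, mul_apply,
    transpose_apply, conjTranspose_apply, kroneckerMap_apply, hZ, Finset.mul_sum, Finset.sum_mul]
  rw [Finset.sum_comm]
  refine Finset.sum_congr rfl fun j _ => ?_
  rw [Finset.sum_congr rfl fun i _ => Finset.sum_comm, Finset.sum_comm]
  refine Finset.sum_congr rfl fun j' _ => ?_
  rw [Finset.sum_comm]
  refine Finset.sum_congr rfl fun i' _ => Finset.sum_congr rfl fun i _ => ?_
  ring

omit [Fintype A] [DecidableEq A] in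
lemma trace_conj_cols [Fintype A] (M : Matrix m m ℂ) (P : Matrix m A ℂ) :
    (Pᴴ * M * P).trace = ∑ j, star (fun i => P i j) ⬝ᵥ M *ᵥ (fun i => P i j) := by
  simp only [dotProduct, mulVec, Pi.star_apply, trace, diag_apply, mul_apply,
    conjTranspose_apply, Finset.mul_sum, Finset.sum_mul]
  refine Finset.sum_congr rfl fun j _ => ?_
  rw [Finset.sum_comm]
  refine Finset.sum_congr rfl fun i _ => Finset.sum_congr rfl fun i' _ => ?_
  ring

lemma psd_of_re {M : Matrix m m ℂ} (hM : M.IsHermitian)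
    (h : ∀ x, 0 ≤ (star x ⬝ᵥ M *ᵥ x).re) : M.PosSemidef := by
  refine PosSemidef.of_dotProduct_mulVec_nonneg hM fun x => ?_
  rw [Complex.le_def]
  refine ⟨h x, ?_⟩
  have := hM.im_star_dotProduct_mulVec_self x
  simpa using this.symm

end Forms

section LownerStep
variable {A B C E : Type*} [Fintype A] [DecidableEq A] [Fintype B] [DecidableEq B]
  [Fintype C] [DecidableEq C] [Fintype E] [DecidableEq E]

/-- The rearrangement `B × (C × E) ≃ (B × E) × C`. -/
def rearr (B C E : Type*) : B × (C × E) ≃ (B × E) × C where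
  toFun p := ((p.1, p.2.2), p.2.1)
  invFun p := (p.1.1, (p.2, p.1.2))
  left_inv _ := rfl
  right_inv _ := rfl

/-- The operator `ω ⊗ σ` with `ω` acting on `B, E` and `σ` acting on `C`, on `B × (C × E)`. -/
def kronBE (ω : Matrix (B × E) (B × E) ℂ) (σ : Matrix C C ℂ) :
    Matrix (B × (C × E)) (B × (C × E)) ℂ :=
  (ω ⊗ₖ σ).submatrix (rearr B C E) (rearr B C E)

omit [DecidableEq B] [DecidableEq C] [DecidableEq E] in
lemma form_kronBE (ω : Matrix (B × E) (B × E) ℂ) (σ : Matrix C C ℂ) (h : B × (C × E) → ℂ)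
    (H : Matrix C (B × E) ℂ) (hH : ∀ b c e, H c (b, e) = h (b, (c, e))) :
    star h ⬝ᵥ kronBE ω σ *ᵥ h = (ω * (Hᴴ * σ * H)ᵀ).trace := by
  have : h = (h ∘ (rearr B C E).symm) ∘ (rearr B C E) := by
    ext; simp
  rw [kronBE, submatrix_mulVec_equiv]
  rw [← form_kron_left ω σ (h ∘ (rearr B C E).symm) H (by rintro ⟨b, e⟩ c; exact hH b c e)]
  rw [dotProduct, dotProduct]
  refine Fintype.sum_equiv (rearr B C E) _ _ fun p => ?_
  simp

omit [DecidableEq A] in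
/-- The operator inequality of `lowner_step` tested on the vector with coefficients `H` on the left
and `G` on the right. Writing `ω_y = k_y k_y†` reduces it to `form_inv_le`, one column of `k_y` at a
time. -/
lemma re_trace_form_le {c : ℝ} (hc : 0 < c) (ν : A → Matrix (C × E) (C × E) ℂ)
    (hν : ∀ x, (ν x).PosDef)
    {σ : Matrix C C ℂ} (hσ : σ.PosDef) (hσν : ∀ i j, σ i j = ∑ x, ∑ e, ν x (i, e) (j, e))
    (u : Matrix A A ℂ) (hu : ∀ y x, Complex.normSq (u y x) ≤ c)
    (ω : A → Matrix (B × E) (B × E) ℂ) (hω : ∀ y, (ω y).PosSemidef)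
    {τ : Matrix B B ℂ} (hτ : ∀ i j, τ i j = ∑ y, ∑ e, ω y (i, e) (j, e))
    (H : A → Matrix C (B × E) ℂ) (G : A → Matrix B (C × E) ℂ)
    (hHG : ∀ y b i e, H y i (b, e) = ∑ x, u y x * G x b (i, e)) :
    (∑ y, (ω y * ((H y)ᴴ * σ⁻¹ * H y)ᵀ).trace).re ≤
      c * (∑ x, ((ν x)⁻¹ * ((G x)ᴴ * τ * G x)ᵀ).trace).re := by
  choose k hk using fun y => exists_mul_conjTranspose (hω y)
  -- contract the vectors `H y` and `G x` with the conjugate of `k y`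
  set P : A → Matrix C (B × E) ℂ := fun y => H y * (k y).map star with hP
  set N : A → A → E → Matrix (C × E) (B × E) ℂ := fun y x e =>
    (G x)ᵀ * (Matrix.of fun b j => star (k y (b, e) j)) with hN
  have h1 : ∀ y, (ω y * ((H y)ᴴ * σ⁻¹ * H y)ᵀ).trace =
      ∑ j, star (fun i => P y i j) ⬝ᵥ σ⁻¹ *ᵥ (fun i => P y i j) := by
    intro y
    rw [← trace_conj_cols, hP]
    have e1 : (H y * (k y).map star)ᴴ = (k y)ᵀ * (H y)ᴴ := by
      rw [conjTranspose_mul]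
      congr 1
      ext i j; simp
    have e2 : ((k y).map star)ᵀ = (k y)ᴴ := rfl
    simp only [e1]
    rw [← trace_transpose ((k y)ᵀ * (H y)ᴴ * σ⁻¹ * (H y * (k y).map star))]
    conv_lhs => rw [hk y]
    rw [trace_mul_comm, ← Matrix.mul_assoc, trace_mul_comm, ← e2]
    simp only [transpose_mul, transpose_transpose, Matrix.mul_assoc]
  have h2 : ∀ x, ((ν x)⁻¹ * ((G x)ᴴ * τ * G x)ᵀ).trace =
      ∑ y, ∑ e, ∑ j, star (fun r => N y x e r j) ⬝ᵥ (ν x)⁻¹ *ᵥ (fun r => N y x e r j) := by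
    intro x
    simp only [← trace_conj_cols]
    have e1 : τᵀ = ∑ y, ∑ e, (Matrix.of fun b j => star (k y (b, e) j)) *
        (Matrix.of fun b j => star (k y (b, e) j))ᴴ := by
      ext i j
      simp only [transpose_apply, hτ, Matrix.sum_apply]
      refine Finset.sum_congr rfl fun y _ => Finset.sum_congr rfl fun e _ => ?_
      conv_lhs => rw [hk y]
      simp only [mul_apply, conjTranspose_apply, of_apply, star_star]
      exact Finset.sum_congr rfl fun _ _ => mul_comm _ _
    have e2 : ∀ y e, ((N y x e)ᴴ * (ν x)⁻¹ * N y x e).trace =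
        ((ν x)⁻¹ * ((G x)ᵀ * ((Matrix.of fun b j => star (k y (b, e) j)) *
        (Matrix.of fun b j => star (k y (b, e) j))ᴴ) * ((G x)ᴴ)ᵀ)).trace := by
      intro y e
      have e3 : (N y x e)ᴴ = (Matrix.of fun b j => star (k y (b, e) j))ᴴ * ((G x)ᴴ)ᵀ := by
        rw [hN]
        simp only [conjTranspose_mul]
        rfl
      rw [Matrix.mul_assoc, trace_mul_comm, e3, hN]
      simp only [Matrix.mul_assoc]
    simp only [e2, ← trace_sum, ← Matrix.mul_sum, ← Matrix.sum_mul, ← e1]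
    simp only [transpose_mul, Matrix.mul_assoc]
  simp only [h1, h2, Complex.re_sum, Finset.mul_sum]
  have hmain : ∀ y j, (star (fun i => P y i j) ⬝ᵥ σ⁻¹ *ᵥ (fun i => P y i j)).re ≤
      c * ∑ x, ∑ e, (star (fun r => N y x e r j) ⬝ᵥ (ν x)⁻¹ *ᵥ (fun r => N y x e r j)).re := by
    intro y j
    refine form_inv_le hc ν hν hσ hσν (u y) (hu y) (fun x e r => N y x e r j) _ ?_
    intro i
    simp only [hP, hN, mul_apply, Fintype.sum_prod_type, hHG, transpose_apply, of_apply, map_apply,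
      Finset.mul_sum, Finset.sum_mul]
    rw [Finset.sum_congr rfl fun b _ => Finset.sum_comm, Finset.sum_comm]
    refine Finset.sum_congr rfl fun x _ => ?_
    rw [Finset.sum_comm]
    refine Finset.sum_congr rfl fun e _ => Finset.sum_congr rfl fun b _ => ?_
    ring
  refine (Finset.sum_le_sum fun y _ => Finset.sum_le_sum fun j _ => hmain y j).trans (le_of_eq ?_)
  simp only [Finset.mul_sum]
  rw [Finset.sum_congr rfl fun y _ => Finset.sum_comm, Finset.sum_comm]
  refine Finset.sum_congr rfl fun x _ => Finset.sum_congr rfl fun y _ => ?_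
  rw [Finset.sum_comm]

end LownerStep

/-! ### The operator inequality raised to a power -/

section LownerStep
variable {A B C E : Type*} [Fintype A] [DecidableEq A] [Fintype B] [DecidableEq B]
  [Fintype C] [DecidableEq C] [Fintype E] [DecidableEq E]

omit [DecidableEq B] [DecidableEq C] [DecidableEq E] in
lemma kronBE_psd {ω : Matrix (B × E) (B × E) ℂ} (hω : ω.PosSemidef) {σ : Matrix C C ℂ}
    (hσ : σ.PosSemidef) : (kronBE ω σ).PosSemidef := (hω.kronecker hσ).submatrix _

lemma mpow_kronBE {ω : Matrix (B × E) (B × E) ℂ} (hω : ω.PosSemidef) {σ : Matrix C C ℂ}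
    (hσ : σ.PosSemidef) (t : ℝ) : mpow (kronBE ω σ) t = kronBE (mpow ω t) (mpow σ t) := by
  rw [kronBE, mpow_submatrix (hω.kronecker hσ).1, mpow_kronecker hω hσ, kronBE]

lemma form_le_of_psd {m : Type*} [Fintype m] {M N : Matrix m m ℂ} (h : (N - M).PosSemidef)
    (z : m → ℂ) : (star z ⬝ᵥ M *ᵥ z).re ≤ (star z ⬝ᵥ N *ᵥ z).re := by
  have := h.re_dotProduct_nonneg z
  rw [sub_mulVec, dotProduct_sub, map_sub] at this
  simpa using this

/-- The operator inequality `⨁ ω_y ⊗ σ⁻¹ ≤ c d 𝒰 (⨁ τ' ⊗ ν_x⁻¹) 𝒰†` with `𝒰 = u ⊗ 1`, raised to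
the power `t ∈ [0, 1]` and evaluated on the vector `T = 𝒰 S`. Here `σ` is the `C`-marginal of `ν`
and `d τ'` dominates the `B`-marginal `τ` of `ω`. -/
lemma lowner_step {c t : ℝ} (hc : 0 < c) (ht : t ∈ Set.Icc (0:ℝ) 1)
    (u : Matrix A A ℂ) (hu1 : uᴴ * u = 1) (hu : ∀ y x, Complex.normSq (u y x) ≤ c)
    (S : A → Matrix B (C × E) ℂ) (T : A → Matrix C (B × E) ℂ)
    (hTS : ∀ y b i e, T y i (b, e) = ∑ x, u y x * S x b (i, e))
    (ω : A → Matrix (B × E) (B × E) ℂ) (hω : ∀ y, (ω y).PosSemidef)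
    {τ τ' : Matrix B B ℂ} (hτ : ∀ i j, τ i j = ∑ y, ∑ e, ω y (i, e) (j, e)) (hτ' : τ'.PosDef)
    {d : ℝ} (hd : 0 < d) (hττ' : (d • τ' - τ).PosSemidef)
    (ν : A → Matrix (C × E) (C × E) ℂ) (hν : ∀ x, (ν x).PosDef)
    {σ : Matrix C C ℂ} (hσ : σ.PosDef) (hσν : ∀ i j, σ i j = ∑ x, ∑ e, ν x (i, e) (j, e)) :
    ∑ y, (mpow (ω y) t * wMat T (-t) σ y).trace.re ≤
      (c * d) ^ t * ∑ x, (mpow (ν x) (-t) * wMat S t τ' x).trace.re := by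
  have hu2 : u * uᴴ = 1 := mul_eq_one_comm.mp hu1
  set 𝒰 : Matrix (A × (B × (C × E))) (A × (B × (C × E))) ℂ := u ⊗ₖ 1 with h𝒰
  have hU1 : 𝒰ᴴ * 𝒰 = 1 := by
    rw [h𝒰, conjTranspose_kronecker, ← mul_kronecker_mul, hu1, conjTranspose_one, one_mul,
      one_kronecker_one]
  have hU2 : 𝒰 * 𝒰ᴴ = 1 := mul_eq_one_comm.mp hU1
  have hUapp : ∀ (g : A × (B × (C × E)) → ℂ) y r, (𝒰 *ᵥ g) (y, r) = ∑ x, u y x * g (x, r) := by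
    intro g y r
    simp [h𝒰, mulVec, dotProduct, Fintype.sum_prod_type, one_apply]
  set X := bd fun x => τ' ⊗ₖ (ν x)⁻¹ with hX
  set D := bd fun y => kronBE (ω y) σ⁻¹ with hD
  have hXpsd : X.PosSemidef := psd_bd fun x => hτ'.posSemidef.kronecker (hν x).inv.posSemidef
  have hDpsd : D.PosSemidef := psd_bd fun y => kronBE_psd (hω y) hσ.inv.posSemidef
  have hUX : ((c * d) • (𝒰 * X * 𝒰ᴴ)).PosSemidef :=
    (hXpsd.mul_mul_conjTranspose_same 𝒰).smul (mul_pos hc hd).le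
  have hle : ((c * d) • (𝒰 * X * 𝒰ᴴ) - D).PosSemidef := by
    refine psd_of_re (hUX.1.sub hDpsd.1) fun h => ?_
    set g := 𝒰ᴴ *ᵥ h with hg
    have hgh : 𝒰 *ᵥ g = h := by rw [hg, mulVec_mulVec, hU2, one_mulVec]
    have e1 : star h ⬝ᵥ (𝒰 * X * 𝒰ᴴ) *ᵥ h = star g ⬝ᵥ X *ᵥ g := by
      rw [← mulVec_mulVec, ← hg, ← mulVec_mulVec, dotProduct_mulVec, hg, star_mulVec,
        conjTranspose_conjTranspose]
    set H : A → Matrix C (B × E) ℂ := fun y => Matrix.of fun i r => h (y, (r.1, (i, r.2)))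
    set G : A → Matrix B (C × E) ℂ := fun x => Matrix.of fun b r => g (x, (b, r))
    have hHG : ∀ y b i e, H y i (b, e) = ∑ x, u y x * G x b (i, e) := by
      intro y b i e
      simp only [H, G, of_apply, ← hUapp, hgh]
    have e2 := re_trace_form_le hc ν hν hσ hσν u hu ω hω hτ H G hHG
    have e3 : star h ⬝ᵥ D *ᵥ h = ∑ y, (ω y * ((H y)ᴴ * σ⁻¹ * H y)ᵀ).trace := by
      rw [hD, form_bd]
      exact Finset.sum_congr rfl fun y _ => form_kronBE _ _ _ (H y) fun _ _ _ => rfl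
    have e4 : star g ⬝ᵥ (bd fun x => τ ⊗ₖ (ν x)⁻¹) *ᵥ g =
        ∑ x, ((ν x)⁻¹ * ((G x)ᴴ * τ * G x)ᵀ).trace := by
      rw [form_bd]
      exact Finset.sum_congr rfl fun x _ => form_kron_right _ _ _ (G x) fun _ _ => rfl
    have e5 : (star g ⬝ᵥ (bd fun x => τ ⊗ₖ (ν x)⁻¹) *ᵥ g).re ≤ (star g ⬝ᵥ (d • X) *ᵥ g).re := by
      refine form_le_of_psd ?_ g
      have : d • X - (bd fun x => τ ⊗ₖ (ν x)⁻¹) = bd fun x => (d • τ' - τ) ⊗ₖ (ν x)⁻¹ := by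
        ext p q
        by_cases h : p.1 = q.1
        · simp [hX, bd, h, sub_mul, mul_assoc]
        · simp [hX, bd, h]
      rw [this]
      exact psd_bd fun x => hττ'.kronecker (hν x).inv.posSemidef
    rw [sub_mulVec, dotProduct_sub, smul_mulVec, dotProduct_smul, e1, Complex.sub_re,
      Complex.smul_re, e3]
    rw [smul_mulVec, dotProduct_smul, Complex.smul_re, e4] at e5
    rw [smul_eq_mul] at e5 ⊢
    nlinarith [mul_le_mul_of_nonneg_left e5 hc.le]
  have hpow := mpow_mono hDpsd hle ht
  rw [mpow_smul (hXpsd.mul_mul_conjTranspose_same 𝒰) (mul_pos hc hd).le, mpow_conj hU1 hXpsd.1, hX, hD,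
    mpow_bd fun x => (hτ'.posSemidef.kronecker (hν x).inv.posSemidef).1,
    mpow_bd fun y => (kronBE_psd (hω y) hσ.inv.posSemidef).1] at hpow
  have i1 : ∀ (M : Matrix C C ℂ), M.PosDef → mpow M⁻¹ t = mpow M (-t) := by
    intro M hM; rw [← mpow_neg_one hM, mpow_mpow hM.posSemidef]; simp
  have i2 : ∀ (M : Matrix (C × E) (C × E) ℂ), M.PosDef → mpow M⁻¹ t = mpow M (-t) := by
    intro M hM; rw [← mpow_neg_one hM, mpow_mpow hM.posSemidef]; simp
  simp only [mpow_kronecker hτ'.posSemidef (hν _).inv.posSemidef, mpow_kronBE (hω _) hσ.inv.posSemidef,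
    i1 σ hσ, i2 _ (hν _)] at hpow
  set g : A × (B × (C × E)) → ℂ := fun p => S p.1 p.2.1 p.2.2 with hg
  have hT : ∀ y b i e, T y i (b, e) = (𝒰 *ᵥ g) (y, (b, (i, e))) := by
    intro y b i e
    rw [hUapp, hTS]
  have fin := form_le_of_psd hpow (𝒰 *ᵥ g)
  have gg : 𝒰ᴴ *ᵥ (𝒰 *ᵥ g) = g := by rw [mulVec_mulVec, hU1, one_mulVec]
  have e1 : ∀ Y, star (𝒰 *ᵥ g) ⬝ᵥ (𝒰 * Y * 𝒰ᴴ) *ᵥ (𝒰 *ᵥ g) = star g ⬝ᵥ Y *ᵥ g := by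
    intro Y
    rw [← mulVec_mulVec, gg, ← mulVec_mulVec, dotProduct_mulVec, star_mulVec, vecMul_vecMul, hU1,
      vecMul_one]
  rw [smul_mulVec, dotProduct_smul, e1, form_bd, form_bd, Complex.smul_re, smul_eq_mul,
    Complex.re_sum, Complex.re_sum] at fin
  have f1 : ∀ y, star (fun i => (𝒰 *ᵥ g) (y, i)) ⬝ᵥ kronBE (mpow (ω y) t) (mpow σ (-t)) *ᵥ
      (fun i => (𝒰 *ᵥ g) (y, i)) = (mpow (ω y) t * wMat T (-t) σ y).trace := fun y =>
    form_kronBE _ _ _ (T y) fun b i e => hT y b i e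
  have f2 : ∀ x, star (fun i => g (x, i)) ⬝ᵥ (mpow τ' t ⊗ₖ mpow (ν x) (-t)) *ᵥ
      (fun i => g (x, i)) = (mpow (ν x) (-t) * wMat S t τ' x).trace := fun x =>
    form_kron_right _ _ _ (S x) fun _ _ => rfl
  simpa only [f1, f2] using fin

end LownerStep

/-! ### The entropy on the purifying side -/

section Entropy
variable {A D F : Type*} [Fintype A] [DecidableEq A] [Fintype D] [DecidableEq D]
  [Fintype F] [DecidableEq F]

/-- The trace in the definition of `condRenyiUp`, for the state with blocks `S_x S_x†`. -/
lemma trace_sandwich (S : A → Matrix D F ℂ) {σ : Matrix D D ℂ} (hσ : σ.PosDef) (r : ℝ) {γ : ℝ}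
    (hγ : γ ≠ 0) :
    ((mpow (((1 : Matrix A A ℂ) ⊗ₖ mpow σ r) * bd (fun x => S x * (S x)ᴴ) *
      ((1 : Matrix A A ℂ) ⊗ₖ mpow σ r)) γ).trace).re = ∑ x, ptr (wMat S (r + r) σ x) γ := by
  have hH : (mpow σ r)ᴴ = mpow σ r := (mpow_psd hσ.posSemidef r).1
  have e : ∀ x, mpow σ r * (S x * (S x)ᴴ) * mpow σ r = (mpow σ r * S x) * (mpow σ r * S x)ᴴ := by
    intro x
    rw [conjTranspose_mul, hH]
    simp only [Matrix.mul_assoc]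
  rw [one_kron_eq_bd, bd_mul, bd_mul]
  simp only [e]
  rw [mpow_bd fun x => isHermitian_mul_conjTranspose_self _, bd_trace, Complex.re_sum]
  refine Finset.sum_congr rfl fun x _ => ?_
  rw [trace_mpow_swap _ hγ, ptr, wMat, ← mpow_mul_mpow hσ, conjTranspose_mul, hH]
  simp only [Matrix.mul_assoc]

/-- The entropy of the state with blocks `S_x S_x†`, written on the purifying side. -/
lemma condRenyiUp_bd (S : A → Matrix D F ℂ) {γ : ℝ} (hγ : γ ≠ 0) :
    condRenyiUp γ (bd fun x => S x * (S x)ᴴ) =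
      ⨆ σ : {σ : Matrix D D ℂ // σ.PosDef ∧ σ.trace = 1},
        (1 / (1 - γ)) * Real.log (∑ x, ptr (wMat S ((1 - γ) / γ) σ.1 x) γ) := by
  rw [condRenyiUp]
  refine iSup_congr fun σ => ?_
  have e : (1 - γ) / (2 * γ) + (1 - γ) / (2 * γ) = (1 - γ) / γ := by field_simp; ring
  rw [trace_sandwich S σ.2.1 _ hγ, e]

/-- For `t ∈ [0, 1]`, a density matrix satisfies `σ ^ t ≤ 1 ≤ σ ^ (-t)`. -/
lemma mpow_le_one_le {σ : Matrix D D ℂ} (hσ : σ.PosDef) (hσ1 : σ.trace = 1) {t : ℝ} (ht : 0 ≤ t) :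
    (1 - mpow σ t).PosSemidef ∧ (mpow σ (-t) - 1).PosSemidef := by
  obtain ⟨V, l, h1, h2, h3, h4⟩ := exists_diag_pd hσ
  have hl : ∀ i, l i ≤ 1 := by
    intro i
    have := congrArg Complex.re hσ1
    rw [h4, trace_diag h1, Complex.one_re] at this
    rw [← this]
    exact Finset.single_le_sum (f := l) (fun i _ => (h3 i).le) (Finset.mem_univ i)
  have sub : ∀ a b : D → ℝ, V * diagonal (fun i => (a i : ℂ)) * Vᴴ -
      V * diagonal (fun i => (b i : ℂ)) * Vᴴ =
      V * diagonal (fun i => ((a i - b i : ℝ) : ℂ)) * Vᴴ := by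
    intro a b
    rw [sub_eq_iff_eq_add, add_diag]
    simp
  rw [h4, mpow_diag h1, mpow_diag h1, one_eq_diag h2, sub, sub]
  refine ⟨psd_diag _ fun i => ?_, psd_diag _ fun i => ?_⟩
  · linarith [Real.rpow_le_one (h3 i).le (hl i) ht]
  · linarith [Real.one_le_rpow_of_pos_of_le_one_of_nonpos (h3 i) (hl i) (neg_nonpos.2 ht)]

omit [DecidableEq A] in
/-- Bounds the entropy of order `α < 1` uniformly in `σ`, so that the supremum in
`condRenyiUp` is a genuine least upper bound. -/
lemma sum_ptr_le (S : A → Matrix D F ℂ) (hS : ∑ x, ((S x)ᴴ * S x).trace.re = 1)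
    {σ : Matrix D D ℂ} (hσ : σ.PosDef) (hσ1 : σ.trace = 1) {t α : ℝ} (ht : 0 ≤ t) (hα : 0 < α) :
    ∑ x, ptr (wMat S t σ x) α ≤ Fintype.card A * Fintype.card F := by
  have h1 : ∀ x, (wMat S t σ x).trace.re ≤ ((S x)ᴴ * S x).trace.re := by
    intro x
    have h := (mpow_le_one_le hσ hσ1 ht).1
    have := (Complex.le_def.1 (h.conjTranspose_mul_mul_same (S x)).trace_nonneg).1
    rw [Matrix.mul_sub, Matrix.sub_mul, trace_sub, Complex.sub_re, Complex.zero_re,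
      Matrix.mul_one] at this
    rw [wMat, trace_transpose]
    linarith
  have h2 : ∀ x, ((S x)ᴴ * S x).trace.re ≤ 1 := by
    intro x
    rw [← hS]
    exact Finset.single_le_sum (f := fun x => ((S x)ᴴ * S x).trace.re)
      (fun x _ => (Complex.le_def.1 (posSemidef_conjTranspose_mul_self (S x)).trace_nonneg).1)
      (Finset.mem_univ x)
  calc ∑ x, ptr (wMat S t σ x) α ≤ ∑ _x : A, (Fintype.card F : ℝ) :=
        Finset.sum_le_sum fun x _ =>
          ptr_le_card (wMat_psd S t hσ.posSemidef x) hα ((h1 x).trans (h2 x))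
    _ = _ := by simp

/-- Bounds the entropy of order `β > 1` uniformly in `σ`, so that the supremum in
`condRenyiUp` is a genuine least upper bound. -/
lemma le_sum_ptr (T : A → Matrix D F ℂ) (hT : ∑ x, ((T x)ᴴ * T x).trace.re = 1)
    {σ : Matrix D D ℂ} (hσ : σ.PosDef) (hσ1 : σ.trace = 1) {t β : ℝ} (ht : 0 ≤ t) (hβ : 0 < β) :
    ((Fintype.card (A × F) : ℝ)⁻¹) ^ β ≤ ∑ x, ptr (wMat T (-t) σ x) β := by
  have h1 : ∀ x, ((T x)ᴴ * T x).trace.re ≤ (wMat T (-t) σ x).trace.re := by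
    intro x
    have h := (mpow_le_one_le hσ hσ1 ht).2
    have := (Complex.le_def.1 (h.conjTranspose_mul_mul_same (T x)).trace_nonneg).1
    rw [Matrix.mul_sub, Matrix.sub_mul, trace_sub, Complex.sub_re, Complex.zero_re,
      Matrix.mul_one] at this
    rw [wMat, trace_transpose]
    linarith
  have hpsd := wMat_psd T (-t) hσ.posSemidef
  have h2 : ptr (bd (wMat T (-t) σ)) β = ∑ x, ptr (wMat T (-t) σ x) β := by
    rw [ptr, mpow_bd fun x => (hpsd x).1, bd_trace, Complex.re_sum]
    rfl
  have h3 : 1 ≤ (bd (wMat T (-t) σ)).trace.re := by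
    rw [bd_trace, Complex.re_sum, ← hT]
    exact Finset.sum_le_sum fun x _ => h1 x
  rw [← h2]
  exact le_ptr (psd_bd hpsd) hβ (by positivity) (mul_inv_le_one.trans h3) (by linarith)

end Entropy

/-! ### The uncertainty relation for block vectors -/

section Main
variable {A B C E : Type*} [Fintype A] [DecidableEq A] [Nonempty A]
  [Fintype B] [DecidableEq B] [Nonempty B] [Fintype C] [DecidableEq C] [Nonempty C]
  [Fintype E] [DecidableEq E] [Nonempty E]

omit [DecidableEq A] [Fintype C] [DecidableEq C] [Nonempty C] [DecidableEq E] in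
/-- The `C`-marginal of a positive definite state on `A × (C × E)` that is classical on `A`. -/
lemma marginal_posDef (ν : A → Matrix (C × E) (C × E) ℂ) (hν : ∀ x, (ν x).PosDef) :
    (Matrix.of fun i j => ∑ x, ∑ e, ν x (i, e) (j, e) : Matrix C C ℂ).PosDef := by
  have e : (Matrix.of fun i j => ∑ x, ∑ e, ν x (i, e) (j, e) : Matrix C C ℂ) =
      ∑ x, ∑ e, (ν x).submatrix (fun c => (c, e)) (fun c => (c, e)) := by
    ext i j
    simp [Matrix.sum_apply]
  rw [e]
  refine posDef_sum Finset.univ_nonempty fun x _ => posDef_sum Finset.univ_nonempty fun e _ => ?_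
  exact (hν x).submatrix fun a b h => (Prod.ext_iff.1 h).1

omit [DecidableEq A] [Nonempty A] [Fintype C] [DecidableEq C] [Nonempty C] [DecidableEq E]
  [Nonempty E] in
lemma marginal_posSemidef (ν : A → Matrix (C × E) (C × E) ℂ) (hν : ∀ x, (ν x).PosSemidef) :
    (Matrix.of fun i j => ∑ x, ∑ e, ν x (i, e) (j, e) : Matrix C C ℂ).PosSemidef := by
  have e : (Matrix.of fun i j => ∑ x, ∑ e, ν x (i, e) (j, e) : Matrix C C ℂ) =
      ∑ x, ∑ e, (ν x).submatrix (fun c => (c, e)) (fun c => (c, e)) := by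
    ext i j
    simp [Matrix.sum_apply]
  rw [e]
  exact posSemidef_sum _ fun x _ => posSemidef_sum _ fun e _ => (hν x).submatrix _

omit [DecidableEq A] [Nonempty A] [DecidableEq C] [Nonempty C] [DecidableEq E] [Nonempty E] in
lemma marginal_trace (ν : A → Matrix (C × E) (C × E) ℂ) (hν : ∀ x, (ν x).PosSemidef)
    (h1 : ∑ x, (ν x).trace.re = 1) :
    (Matrix.of fun i j => ∑ x, ∑ e, ν x (i, e) (j, e) : Matrix C C ℂ).trace = 1 := by
  have e : (Matrix.of fun i j => ∑ x, ∑ e, ν x (i, e) (j, e) : Matrix C C ℂ).trace =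
      ∑ x, (ν x).trace := by
    simp only [trace, diag_apply, of_apply, Fintype.sum_prod_type]
    rw [Finset.sum_comm]
  rw [e]
  have h2 : ∀ x, (ν x).trace = ((ν x).trace.re : ℂ) := by
    intro x
    have := (Complex.le_def.1 (hν x).trace_nonneg).2
    apply Complex.ext <;> simp [← this]
  rw [Finset.sum_congr rfl fun x _ => h2 x]
  exact_mod_cast h1

omit [DecidableEq A] in
lemma cqStates_nonempty (A G : Type*) [Fintype A] [Nonempty A] [Fintype G] [DecidableEq G] [Nonempty G] :
    (cqStates A G).Nonempty := by
  refine ⟨fun _ => ((Fintype.card A * Fintype.card G : ℝ)⁻¹) • 1,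
    fun _ => PosSemidef.one.smul (by positivity), ?_⟩
  simp [trace_smul]
  field_simp

/-- A lower bound on `Q_β(σ)^{1/β}` uniform in `σ` gives a lower bound on `Q_α(τ')^{1/α}` for some
`τ'`. The state `τ'` is a perturbation of the `B`-marginal of the minimax witness `ω`. -/
lemma exists_witness {α β t c L : ℝ} (hα0 : 0 < α) (hβ : 1 < β)
    (hαt : t = (1 - α) / α) (hβt : t = (β - 1) / β) (hc : 0 < c)
    (u : Matrix A A ℂ) (hu1 : uᴴ * u = 1) (hu : ∀ y x, Complex.normSq (u y x) ≤ c)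
    (S : A → Matrix B (C × E) ℂ) (T : A → Matrix C (B × E) ℂ)
    (hTS : ∀ y b i e, T y i (b, e) = ∑ x, u y x * S x b (i, e))
    (hZ : ∀ σ : Matrix C C ℂ, σ.PosDef → σ.trace = 1 → 0 < ∑ y, ptr (wMat T (-t) σ y) β)
    (hL : ∀ σ : Matrix C C ℂ, σ.PosDef → σ.trace = 1 →
      L ≤ (∑ y, ptr (wMat T (-t) σ y) β) ^ (1 / β)) {ε : ℝ} (hε : 0 < ε) :
    ∃ τ' : Matrix B B ℂ, τ'.PosDef ∧ τ'.trace = 1 ∧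
      L ≤ (c * (1 + ε)) ^ t * (∑ x, ptr (wMat S t τ' x) α) ^ (1 / α) := by
  have ht : t ∈ Set.Icc (0:ℝ) 1 := by
    rw [hβt]; constructor
    · apply div_nonneg <;> linarith
    · rw [div_le_one (by linarith)]; linarith
  obtain ⟨ω, hω, hωL⟩ := exists_state_minimax hβ hβt T hZ hL (cqStates_nonempty A (B × E))
  have hd : 0 < 1 + ε := by linarith
  set τ : Matrix B B ℂ := Matrix.of fun i j => ∑ y, ∑ e, ω y (i, e) (j, e) with hτ
  have hτpsd : τ.PosSemidef := marginal_posSemidef ω hω.1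
  have hτ1 : τ.trace = 1 := marginal_trace ω hω.1 hω.2
  have hcard : (0:ℝ) < Fintype.card B := by exact_mod_cast Fintype.card_pos
  -- mixing `τ` with the maximally mixed state makes it invertible at the cost of a factor `1 + ε`
  set κ : ℝ := ε / Fintype.card B with hκ
  have hκ0 : 0 < κ := by positivity
  set τ' : Matrix B B ℂ := (1 + ε)⁻¹ • (τ + κ • 1) with hτ'
  have h1 : τ'.PosDef :=
    (PosDef.posSemidef_add hτpsd (PosDef.one.smul hκ0)).smul (inv_pos.2 hd)
  have h2 : τ'.trace = 1 := by
    rw [hτ', trace_smul, trace_add, trace_smul, hτ1, trace_one, Complex.real_smul,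
      Complex.real_smul]
    have : κ * Fintype.card B = ε := by rw [hκ]; field_simp
    have h3 : (κ : ℂ) * (Fintype.card B : ℂ) = ε := by exact_mod_cast this
    rw [h3, Complex.ofReal_inv]
    push_cast
    exact inv_mul_cancel₀ (by exact_mod_cast hd.ne')
  have h3 : ((1 + ε) • τ' - τ).PosSemidef := by
    rw [hτ', smul_smul, mul_inv_cancel₀ hd.ne', one_smul, add_sub_cancel_left]
    exact PosSemidef.one.smul hκ0.le
  refine ⟨τ', h1, h2, ?_⟩
  have hcd : 0 < (c * (1 + ε)) ^ t := Real.rpow_pos_of_pos (mul_pos hc hd) t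
  rw [← div_le_iff₀' hcd]
  refine le_of_forall_state hα0 hαt (wMat S t τ') (wMat_psd S t h1.posSemidef) fun ν hν hν1 => ?_
  rw [div_le_iff₀' hcd]
  have hσ := marginal_posDef ν hν
  refine (hωL _ hσ (marginal_trace ν (fun x => (hν x).posSemidef) hν1)).trans ?_
  exact lowner_step hc ht u hu1 hu S T hTS ω hω.1 (fun i j => rfl) h1 hd h3 ν hν hσ fun i j => rfl

/-- The uncertainty relation for block vectors `S` and `T = (u ⊗ 1) S`, for `α < 1 < β`. -/
lemma uncertainty_blocks {α β c : ℝ} (hα : 1 / 2 < α) (hα1 : α < 1) (hβ : 1 < β)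
    (hαβ : 1 / α + 1 / β = 2) (hc : 0 < c)
    (u : Matrix A A ℂ) (hu1 : uᴴ * u = 1) (hu : ∀ y x, Complex.normSq (u y x) ≤ c)
    (S : A → Matrix B (C × E) ℂ) (T : A → Matrix C (B × E) ℂ)
    (hTS : ∀ y b i e, T y i (b, e) = ∑ x, u y x * S x b (i, e))
    (hS : ∑ x, ((S x)ᴴ * S x).trace.re = 1) (hT : ∑ y, ((T y)ᴴ * T y).trace.re = 1) :
    -Real.log c ≤ condRenyiUp α (bd fun x => S x * (S x)ᴴ) +
      condRenyiUp β (bd fun y => T y * (T y)ᴴ) := by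
  have hα0 : 0 < α := by linarith
  have hβ0 : 0 < β := by linarith
  set t : ℝ := (1 - α) / α with hαt
  have hβt : t = (β - 1) / β := by
    have e1 : t = 1 / α - 1 := by rw [hαt]; field_simp
    have e2 : (β - 1) / β = 1 - 1 / β := by field_simp
    rw [e1, e2]; linarith
  have ht0 : 0 < t := div_pos (by linarith) hα0
  have ht' : (1 - β) / β = -t := by rw [hβt]; ring
  rw [condRenyiUp_bd S hα0.ne', condRenyiUp_bd T hβ0.ne', ht', ← hαt]
  have hQβ : ∀ σ : Matrix C C ℂ, σ.PosDef → σ.trace = 1 →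
      ((Fintype.card (A × (B × E)) : ℝ)⁻¹) ^ β ≤ ∑ x, ptr (wMat T (-t) σ x) β :=
    fun σ h1 h2 => le_sum_ptr T hT h1 h2 ht0.le hβ0
  have hpos : 0 < ((Fintype.card (A × (B × E)) : ℝ)⁻¹) ^ β := by
    have : 0 < (Fintype.card (A × (B × E)) : ℝ) := by exact_mod_cast Fintype.card_pos
    positivity
  have hZ : ∀ σ : Matrix C C ℂ, σ.PosDef → σ.trace = 1 → 0 < ∑ y, ptr (wMat T (-t) σ y) β :=
    fun σ h1 h2 => hpos.trans_le (hQβ σ h1 h2)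
  set Hβ : ℝ := ⨆ σ : {σ : Matrix C C ℂ // σ.PosDef ∧ σ.trace = 1},
    (1 / (1 - β)) * Real.log (∑ x, ptr (wMat T (-t) σ.1 x) β) with hHβ
  set Hα : ℝ := ⨆ σ : {σ : Matrix B B ℂ // σ.PosDef ∧ σ.trace = 1},
    (1 / (1 - α)) * Real.log (∑ x, ptr (wMat S t σ.1 x) α) with hHα
  have hbβ : BddAbove (Set.range fun σ : {σ : Matrix C C ℂ // σ.PosDef ∧ σ.trace = 1} =>
      (1 / (1 - β)) * Real.log (∑ x, ptr (wMat T (-t) σ.1 x) β)) := by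
    refine ⟨(1 / (1 - β)) * Real.log (((Fintype.card (A × (B × E)) : ℝ)⁻¹) ^ β), ?_⟩
    rintro _ ⟨σ, rfl⟩
    refine mul_le_mul_of_nonpos_left (Real.log_le_log hpos (hQβ σ.1 σ.2.1 σ.2.2)) ?_
    exact div_nonpos_of_nonneg_of_nonpos zero_le_one (by linarith)
  have hbα : BddAbove (Set.range fun σ : {σ : Matrix B B ℂ // σ.PosDef ∧ σ.trace = 1} =>
      (1 / (1 - α)) * Real.log (∑ x, ptr (wMat S t σ.1 x) α)) := by
    refine ⟨(1 / (1 - α)) * Real.log (Fintype.card A * Fintype.card (C × E)), ?_⟩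
    rintro _ ⟨σ, rfl⟩
    refine mul_le_mul_of_nonneg_left ?_ (div_nonneg zero_le_one (by linarith))
    have h1 := sum_ptr_le S hS σ.2.1 σ.2.2 ht0.le hα0
    have h2 : 0 ≤ ∑ x, ptr (wMat S t σ.1 x) α :=
      Finset.sum_nonneg fun x _ => ptr_nonneg (wMat_psd S t σ.2.1.posSemidef x) α
    rcases h2.eq_or_lt with h2 | h2
    · rw [← h2, Real.log_zero]
      have : 1 ≤ Fintype.card A * Fintype.card (C × E) :=
        Nat.mul_pos Fintype.card_pos Fintype.card_pos
      exact Real.log_nonneg (by exact_mod_cast this)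
    · exact Real.log_le_log h2 h1
  have hL : ∀ σ : Matrix C C ℂ, σ.PosDef → σ.trace = 1 →
      Real.exp (-t * Hβ) ≤ (∑ y, ptr (wMat T (-t) σ y) β) ^ (1 / β) := by
    intro σ h1 h2
    have h := le_ciSup hbβ ⟨σ, h1, h2⟩
    rw [← hHβ] at h
    simp only at h
    rw [Real.rpow_def_of_pos (hZ σ h1 h2), Real.exp_le_exp]
    have h3 := mul_le_mul_of_nonpos_left h (neg_nonpos.2 ht0.le)
    refine h3.trans_eq ?_
    have : 1 - β ≠ 0 := by linarith
    rw [hβt]; field_simp; ring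
  -- it suffices to prove the bound with `c` replaced by `c (1 + ε)`
  have hmain : ∀ ε : ℝ, 0 < ε → -Real.log (c * (1 + ε)) ≤ Hα + Hβ := by
    intro ε hε
    obtain ⟨τ', h1, h2, h3⟩ := exists_witness hα0 hβ hαt hβt hc u hu1 hu S T hTS hZ hL hε
    have hcd : 0 < c * (1 + ε) := by positivity
    set Q := ∑ x, ptr (wMat S t τ' x) α with hQ
    have hQ0 : 0 ≤ Q :=
      Finset.sum_nonneg fun x _ => ptr_nonneg (wMat_psd S t h1.posSemidef x) α
    have hQpos : 0 < Q := by
      rcases hQ0.eq_or_lt with h | h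
      · rw [← h, Real.zero_rpow (by positivity), mul_zero] at h3
        exact absurd h3 (not_le.2 (Real.exp_pos _))
      · exact h
    rw [Real.rpow_def_of_pos hcd, Real.rpow_def_of_pos hQpos, ← Real.exp_add,
      Real.exp_le_exp] at h3
    have h := le_ciSup hbα ⟨τ', h1, h2⟩
    rw [← hHα] at h
    simp only [← hQ] at h
    have e : 1 / (1 - α) * Real.log Q * t = Real.log Q * (1 / α) := by
      have : 1 - α ≠ 0 := by linarith
      rw [hαt]; field_simp
    have h4 := mul_le_mul_of_nonneg_right h ht0.le
    rw [e] at h4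
    have h5 : 0 ≤ t * (Hα + Hβ + Real.log (c * (1 + ε))) := by linarith
    linarith [nonneg_of_mul_nonneg_right h5 ht0]
  have hlim : Filter.Tendsto (fun ε : ℝ => -Real.log (c * (1 + ε)))
      (nhdsWithin 0 (Set.Ioi 0)) (nhds (-Real.log (c * (1 + 0)))) := by
    have : ContinuousAt (fun ε : ℝ => -Real.log (c * (1 + ε))) 0 := by
      refine (ContinuousAt.log (by fun_prop) ?_).neg
      simpa using hc.ne'
    exact this.tendsto.mono_left nhdsWithin_le_nhds
  rw [add_zero, mul_one] at hlim
  refine le_of_tendsto hlim ?_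
  filter_upwards [self_mem_nhdsWithin] with ε hε using hmain ε hε

end Main

/-! ### Purification and measurement -/

section Main
variable {A B C E : Type*} [Fintype A] [DecidableEq A] [Nonempty A]
  [Fintype B] [DecidableEq B] [Nonempty B] [Fintype C] [DecidableEq C] [Nonempty C]
  [Fintype E] [DecidableEq E] [Nonempty E]

omit [Nonempty A] [DecidableEq B] [Nonempty B] [DecidableEq C] [Nonempty C]
  [DecidableEq E] [Nonempty E] in
/-- Measuring a purified state: the blocks are `S_x S_x†`, where `S_x` is the vector `R` contracted
with the basis vector `e x`. -/
lemma measuredState_eq_bd (e : A → A → ℂ) (R : A → B → C → E → ℂ) :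
    measuredState e (Matrix.of fun x y : A × B =>
        ∑ c, ∑ f, R x.1 x.2 c f * (starRingEnd ℂ) (R y.1 y.2 c f)) =
      bd fun x => (Matrix.of fun b (q : C × E) => ∑ a, (starRingEnd ℂ) (e x a) * R a b q.1 q.2) *
        (Matrix.of fun b (q : C × E) => ∑ a, (starRingEnd ℂ) (e x a) * R a b q.1 q.2)ᴴ := by
  ext ⟨x, b⟩ ⟨x', b'⟩
  simp only [measuredState, bd, of_apply]
  split_ifs with h
  · simp only [mul_apply, of_apply, conjTranspose_apply, Fintype.sum_prod_type, star_sum,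
      Finset.mul_sum, Finset.sum_mul, star_mul', RCLike.star_def,
      Complex.conj_conj]
    simp only [← Fintype.sum_prod_type']
    refine Fintype.sum_equiv ⟨fun p => (p.2.2.1, p.2.2.2, p.2.1, p.1),
      fun q => (q.2.2.2, q.2.2.1, q.1, q.2.1), fun _ => rfl, fun _ => rfl⟩ _ _ fun p => ?_
    subst h
    simp only [Equiv.coe_fn_mk]
    ring
  · rfl

omit [DecidableEq A] [Nonempty A] in
/-- Completeness of an orthonormal basis. -/
lemma row_orthonormal [DecidableEq A] {φ : A → A → ℂ}
    (hφ : ∀ x y : A, ∑ a, (starRingEnd ℂ) (φ x a) * φ y a = if x = y then (1 : ℂ) else 0)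
    (a a' : A) : ∑ x, φ x a * (starRingEnd ℂ) (φ x a') = if a = a' then (1 : ℂ) else 0 := by
  set P : Matrix A A ℂ := Matrix.of φ with hP
  have h1 : P * Pᴴ = 1 := by
    ext x y
    simp only [mul_apply, hP, of_apply, conjTranspose_apply, one_apply]
    rw [show (if x = y then (1:ℂ) else 0) = if y = x then (1:ℂ) else 0 by simp [eq_comm], ← hφ y x]
    exact Finset.sum_congr rfl fun a _ => mul_comm _ _
  have h2 : Pᴴ * P = 1 := mul_eq_one_comm.mp h1
  replace h2 := congrFun (congrFun h2 a') a
  simp only [mul_apply, hP, of_apply, conjTranspose_apply, one_apply] at h2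
  rw [show (if a = a' then (1:ℂ) else 0) = if a' = a then (1:ℂ) else 0 by simp [eq_comm], ← h2]
  exact Finset.sum_congr rfl fun x _ => mul_comm _ _

omit [Nonempty A] [DecidableEq B] [Nonempty B] [DecidableEq C] [Nonempty C]
  [DecidableEq E] [Nonempty E] in
/-- Contracting with an orthonormal basis preserves the norm of the vector. -/
lemma sum_trace_contract {e : A → A → ℂ}
    (he : ∀ x y : A, ∑ a, (starRingEnd ℂ) (e x a) * e y a = if x = y then (1 : ℂ) else 0)
    (R : A → B → C → E → ℂ) (hR : ∑ a, ∑ b, ∑ c, ∑ f, Complex.normSq (R a b c f) = 1) :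
    ∑ x, ((Matrix.of fun b (q : C × E) => ∑ a, (starRingEnd ℂ) (e x a) * R a b q.1 q.2)ᴴ *
      (Matrix.of fun b (q : C × E) => ∑ a, (starRingEnd ℂ) (e x a) * R a b q.1 q.2)).trace.re
      = 1 := by
  have key : ∀ w : A → ℂ, ∑ x, (star (∑ a, (starRingEnd ℂ) (e x a) * w a) *
      ∑ a, (starRingEnd ℂ) (e x a) * w a) = ∑ a, ((Complex.normSq (w a) : ℝ) : ℂ) := by
    intro w
    have hr := row_orthonormal he
    simp only [star_sum, star_mul', RCLike.star_def, Complex.conj_conj, Finset.sum_mul_sum]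
    rw [Finset.sum_comm]
    refine Finset.sum_congr rfl fun a _ => ?_
    rw [Finset.sum_comm]
    have : ∀ a', ∑ x, e x a * (starRingEnd ℂ) (w a) * ((starRingEnd ℂ) (e x a') * w a') =
        (if a = a' then (1 : ℂ) else 0) * ((starRingEnd ℂ) (w a) * w a') := by
      intro a'
      rw [← hr a a', Finset.sum_mul]
      exact Finset.sum_congr rfl fun x _ => by ring
    simp only [this, ite_mul, one_mul, zero_mul, Finset.sum_ite_eq, Finset.mem_univ, if_true]
    rw [Complex.normSq_eq_conj_mul_self]
  rw [← Complex.re_sum]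
  simp only [trace, diag_apply, mul_apply, conjTranspose_apply, of_apply]
  rw [Finset.sum_comm, Finset.sum_congr rfl fun q _ => Finset.sum_comm]
  simp only [key, ← Complex.ofReal_sum, Complex.ofReal_re]
  rw [← hR, Finset.sum_comm]
  rw [Finset.sum_congr rfl fun b _ => Finset.sum_comm, Finset.sum_comm]
  simp only [Fintype.sum_prod_type]

/-- The uncertainty relation for the pure state with amplitudes `R` when `α < 1 < β`. -/
lemma uncertainty_of_lt {α β c : ℝ} (hα : 1 / 2 < α) (hα1 : α < 1) (hβ : 1 < β)
    (hαβ : 1 / α + 1 / β = 2) (hc : 0 < c) {φ ϑ : A → A → ℂ}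
    (hφ : ∀ x y : A, ∑ a, (starRingEnd ℂ) (φ x a) * φ y a = if x = y then (1 : ℂ) else 0)
    (hϑ : ∀ x y : A, ∑ a, (starRingEnd ℂ) (ϑ x a) * ϑ y a = if x = y then (1 : ℂ) else 0)
    (hφϑ : ∀ y x, Complex.normSq (∑ a, (starRingEnd ℂ) (ϑ y a) * φ x a) ≤ c)
    (R : A → B → C → E → ℂ) (hR : ∑ a, ∑ b, ∑ c, ∑ f, Complex.normSq (R a b c f) = 1) :
    -Real.log c ≤
      condRenyiUp α (measuredState φ (Matrix.of fun x y : A × B =>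
        ∑ c, ∑ f, R x.1 x.2 c f * (starRingEnd ℂ) (R y.1 y.2 c f))) +
      condRenyiUp β (measuredState ϑ (Matrix.of fun x y : A × C =>
        ∑ b, ∑ f, R x.1 b x.2 f * (starRingEnd ℂ) (R y.1 b y.2 f))) := by
  have hR' : ∑ a, ∑ c, ∑ b, ∑ f, Complex.normSq (R a b c f) = 1 := by
    rw [← hR]; exact Finset.sum_congr rfl fun a _ => Finset.sum_comm
  rw [measuredState_eq_bd φ R, measuredState_eq_bd ϑ (fun a c b f => R a b c f)]
  have hφr := row_orthonormal hφ
  have hϑr := row_orthonormal hϑ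
  refine uncertainty_blocks hα hα1 hβ hαβ hc
    (Matrix.of fun y x => ∑ a, (starRingEnd ℂ) (ϑ y a) * φ x a) ?_ hφϑ _ _ ?_
    (sum_trace_contract hφ R hR) (sum_trace_contract hϑ (fun a c b f => R a b c f) hR')
  · ext x x'
    simp only [mul_apply, conjTranspose_apply, of_apply, one_apply, star_sum, star_mul',
      RCLike.star_def, Complex.conj_conj, Finset.sum_mul_sum]
    rw [← hφ x x', Finset.sum_comm]
    refine Finset.sum_congr rfl fun a _ => ?_
    rw [Finset.sum_comm]
    have : ∀ a', ∑ y, ϑ y a * (starRingEnd ℂ) (φ x a) * ((starRingEnd ℂ) (ϑ y a') * φ x' a') =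
        (if a = a' then (1 : ℂ) else 0) * ((starRingEnd ℂ) (φ x a) * φ x' a') := by
      intro a'
      rw [← hϑr a a', Finset.sum_mul]
      exact Finset.sum_congr rfl fun x _ => by ring
    simp [this]
  · intro y b i f
    simp only [of_apply, Finset.sum_mul_sum]
    rw [Finset.sum_comm]
    refine Finset.sum_congr rfl fun a _ => ?_
    rw [Finset.sum_comm]
    have : ∀ a', ∑ x, (starRingEnd ℂ) (ϑ y a) * φ x a * ((starRingEnd ℂ) (φ x a') * R a' b i f) =
        (if a = a' then (1 : ℂ) else 0) * ((starRingEnd ℂ) (ϑ y a) * R a' b i f) := by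
      intro a'
      rw [← hφr a a', Finset.sum_mul]
      exact Finset.sum_congr rfl fun x _ => by ring
    simp [this]

end Main

/-! ### The theorem -/

/-- **Tripartite entropic uncertainty relation for sandwiched conditional Rényi
entropies (generalized Maassen–Uffink relation)**: for two orthonormal bases `φ, ϑ` of
`ℂ^A` with overlap `c = max_{x,y} |⟨φ x, ϑ y⟩|²`, a density matrix `ρ` on `A ⊗ B ⊗ C`,
and `α, β ∈ (1/2,∞) \ {1}` with `1/α + 1/β = 2`,
`H̃_α↑(X|B) + H̃_β↑(Y|C) ≥ -ln c` for the measured states. -/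
theorem tripartite_uncertainty_relation {A B C : Type*}
    [Fintype A] [DecidableEq A] [Nonempty A]
    [Fintype B] [DecidableEq B] [Nonempty B]
    [Fintype C] [DecidableEq C] [Nonempty C]
    (φ ϑ : A → A → ℂ)
    (hφ : ∀ x y : A, ∑ a, (starRingEnd ℂ) (φ x a) * φ y a =
      if x = y then (1 : ℂ) else 0)
    (hϑ : ∀ x y : A, ∑ a, (starRingEnd ℂ) (ϑ x a) * ϑ y a =
      if x = y then (1 : ℂ) else 0)
    (ρ : Matrix (A × B × C) (A × B × C) ℂ) (hρ : ρ.PosSemidef) (hρ1 : ρ.trace = 1)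
    (α β : ℝ) (hα : 1/2 < α) (hα1 : α ≠ 1) (hβ : 1/2 < β) (hβ1 : β ≠ 1)
    (hαβ : 1/α + 1/β = 2) :
    condRenyiUp α
        (measuredState φ
          (Matrix.of fun x y : A × B => ∑ c : C, ρ (x.1, x.2, c) (y.1, y.2, c))) +
      condRenyiUp β
        (measuredState ϑ
          (Matrix.of fun x y : A × C => ∑ b : B, ρ (x.1, b, x.2) (y.1, b, y.2))) ≥
    -Real.log
      (⨆ p : A × A, Complex.normSq (∑ a, (starRingEnd ℂ) (φ p.1 a) * ϑ p.2 a)) := by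
  set c : ℝ := ⨆ p : A × A, Complex.normSq (∑ a, (starRingEnd ℂ) (φ p.1 a) * ϑ p.2 a) with hc
  have hle : ∀ x y, Complex.normSq (∑ a, (starRingEnd ℂ) (φ x a) * ϑ y a) ≤ c := fun x y =>
    le_ciSup (f := fun p : A × A => Complex.normSq (∑ a, (starRingEnd ℂ) (φ p.1 a) * ϑ p.2 a))
      (Set.finite_range _).bddAbove (x, y)
  have hle' : ∀ y x, Complex.normSq (∑ a, (starRingEnd ℂ) (ϑ y a) * φ x a) ≤ c := by
    intro y x
    refine le_trans (le_of_eq ?_) (hle x y)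
    rw [← Complex.normSq_conj, map_sum]
    congr 1
    exact Finset.sum_congr rfl fun a _ => by simp [mul_comm]
  have hc0 : 0 < c := by
    by_contra hcon
    have h0 : ∀ x y, ∑ a, (starRingEnd ℂ) (φ x a) * ϑ y a = 0 := fun x y =>
      Complex.normSq_eq_zero.1 (le_antisymm ((hle x y).trans (not_lt.1 hcon)) (Complex.normSq_nonneg _))
    obtain ⟨y⟩ := ‹Nonempty A›
    -- all overlaps would vanish, so `ϑ y = 0` by completeness of `φ`
    have h1 : ∀ a, ϑ y a = 0 := by
      intro a
      have h2 : ∑ x, φ x a * ∑ a', (starRingEnd ℂ) (φ x a') * ϑ y a' = ϑ y a := by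
        simp only [Finset.mul_sum]
        rw [Finset.sum_comm]
        have : ∀ a', ∑ x, φ x a * ((starRingEnd ℂ) (φ x a') * ϑ y a') =
            (if a = a' then (1 : ℂ) else 0) * ϑ y a' := by
          intro a'
          rw [← row_orthonormal hφ a a', Finset.sum_mul]
          exact Finset.sum_congr rfl fun x _ => by ring
        simp [this]
      rw [← h2]
      simp [h0]
    have := hϑ y y
    simp [h1] at this
  obtain ⟨R, rfl⟩ := exists_mul_conjTranspose hρ
  have hR : ∑ a, ∑ b, ∑ c, ∑ f, Complex.normSq (R (a, b, c) f) = 1 := by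
    have := congrArg Complex.re hρ1
    simp only [trace, diag_apply, mul_apply, conjTranspose_apply, RCLike.star_def,
      Complex.mul_conj, ← Complex.ofReal_sum, Complex.ofReal_re, Complex.one_re] at this
    rw [Fintype.sum_prod_type] at this
    simpa only [Fintype.sum_prod_type (α₁ := B)] using this
  have hR' : ∑ a, ∑ c, ∑ b, ∑ f, Complex.normSq (R (a, b, c) f) = 1 := by
    rw [← hR]; exact Finset.sum_congr rfl fun a _ => Finset.sum_comm
  simp only [mul_apply, conjTranspose_apply, RCLike.star_def]
  rcases lt_or_gt_of_ne hα1 with h | h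
  · have hβ' : 1 < β := by
      have h1 : 1 < 1 / α := by rw [lt_div_iff₀ (by linarith)]; linarith
      have h2 : 1 / β < 1 := by linarith
      rwa [div_lt_one (by linarith)] at h2
    exact uncertainty_of_lt hα h hβ' hαβ hc0 hφ hϑ hle' (fun a b c f => R (a, b, c) f) hR
  · have hβ' : β < 1 := by
      have h1 : 1 / α < 1 := by rw [div_lt_one (by linarith)]; exact h
      have h2 : 1 < 1 / β := by linarith
      rwa [lt_div_iff₀ (by linarith), one_mul] at h2
    have := uncertainty_of_lt hβ hβ' h (by linarith) hc0 hϑ hφ hle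
      (fun a c b f => R (a, b, c) f) hR'
    linarith
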